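/- Let (R, 𝔪, k) be a regular local ring of dimension 3 with 𝔪 = (x_1, x_2, x_3) and let p ≥ 4. Let J_p = I_{p−1}(X_p) + (x_3^{p−1}) and J'_p = I_{p−1}(X'_p) + (x_3^{2(p−1)}), where X'_p is X_p with each entry squared; both R/J_p and R/J'_p have Tor-algebra class H(p, p−1) with standard-form minimal DG-algebra resolutions whose generators f_1^1, …, f_1^p correspond to the maximal minors and f_1^{p+1} to the added power. Let σ be an index set of cardinality t and Q_1 the degree-1 comparison map of the associated trimming complex. Then: (1) if p+1 ∉ σ, tm_σ(J_p) defines either a Golod ring or a ring of Tor-algebra class H(p − t, p − 1 − rank_k(Q_1 ⊗ k)); in particular, if σ = [t] with t < p, then tm_{[t]}(J_p) defines a ring of Tor-algebra class H(p − t, p − 1 − t); (2) if p+1 ∈ σ, tm_σ(J_p) defines a Golod ring; (3) if p+1 ∉ σ, tm_σ(J'_p) defines a ring of Tor-algebra class H(p − t, p − 1); (4) if p+1 ∈ σ, tm_σ(J'_p) defines a Golod ring. -/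

import Mathlib

open IsLocalRing

section TorAlgebraClasses

open IsLocalRing

variable (R : Type) [CommRing R] [IsLocalRing R]

/-- The trimming operation on ideals: for `I = (φ 0, …, φ (n-1))` and an index set
`σ`, `tm_σ(I) = (φ i : i ∉ σ) + 𝔪·(φ j : j ∈ σ)`. -/
def trimIdeal {n : ℕ} (φ : Fin n → R) (σ : Finset (Fin n)) : Ideal R :=
  Ideal.span (φ '' {i | i ∉ σ}) ⊔ maximalIdeal R * Ideal.span (φ '' {i | i ∈ σ})

/-- `R/J` has projective dimension `3` and Tor-algebra class `G(r)`
(Avramov–Kustin–Miller normal form): encoded by the existence of a minimal free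
resolution `0 → R^{n3} → R^{n2} → R^{n1} → R` of `R/J` carrying an associative
DG-algebra structure whose induced multiplication on `Tor^R_•(R/J, k) = F̄_•`
is, with respect to the standard bases, in the `G(r)` normal form:
`f̄₁ⁱ f̄₂ⁱ = f̄₃¹` for `1 ≤ i ≤ r` and all other products of basis elements vanish. -/
def HasTorClassG (J : Ideal R) (r : ℕ) : Prop :=
  ∃ (n1 n2 n3 : ℕ) (h3 : 0 < n3), r ≤ n1 ∧ r ≤ n2 ∧
  ∃ (d1 : (Fin n1 → R) →ₗ[R] R) (d2 : (Fin n2 → R) →ₗ[R] (Fin n1 → R))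
    (d3 : (Fin n3 → R) →ₗ[R] (Fin n2 → R))
    (m11 : (Fin n1 → R) →ₗ[R] (Fin n1 → R) →ₗ[R] (Fin n2 → R))
    (m12 : (Fin n1 → R) →ₗ[R] (Fin n2 → R) →ₗ[R] (Fin n3 → R)),
    -- minimal free resolution of R/J
    LinearMap.range d1 = J ∧
    LinearMap.ker d1 = LinearMap.range d2 ∧
    LinearMap.ker d2 = LinearMap.range d3 ∧
    LinearMap.ker d3 = ⊥ ∧
    (∀ v, d1 v ∈ maximalIdeal R) ∧
    (∀ v, d2 v ∈ maximalIdeal R • (⊤ : Submodule R (Fin n1 → R))) ∧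
    (∀ v, d3 v ∈ maximalIdeal R • (⊤ : Submodule R (Fin n2 → R))) ∧
    -- DG-algebra axioms
    (∀ a b, d2 (m11 a b) = d1 a • b - d1 b • a) ∧
    (∀ a, m11 a a = 0) ∧ (∀ a b, m11 a b = - m11 b a) ∧
    (∀ a z, d3 (m12 a z) = d1 a • z - m11 a (d2 z)) ∧
    (∀ a b c, m12 c (m11 a b) = m12 a (m11 b c)) ∧
    -- G(r) normal form for the induced products on `F ⊗ k`
    (∀ a b : Fin n1, m11 (Pi.single a 1) (Pi.single b 1) ∈
      maximalIdeal R • (⊤ : Submodule R (Fin n2 → R))) ∧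
    (∀ (a : Fin n1) (b : Fin n2),
      m12 (Pi.single a 1) (Pi.single b 1) -
        (if (a : ℕ) = (b : ℕ) ∧ (a : ℕ) < r then Pi.single (⟨0, h3⟩ : Fin n3) 1 else 0) ∈
      maximalIdeal R • (⊤ : Submodule R (Fin n3 → R)))

/-- `R/J` has projective dimension `3` and Tor-algebra class `H(p,q)`:
`f̄₁^{p+1} f̄₁ⁱ = f̄₂ⁱ` for `1 ≤ i ≤ p`, `f̄₁^{p+1} f̄₂^{p+i} = f̄₃ⁱ` for `1 ≤ i ≤ q`,
and all other products of basis elements vanish (0-based indices below). -/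
def HasTorClassH (J : Ideal R) (p q : ℕ) : Prop :=
  ∃ (n1 n2 n3 : ℕ) (hp : p < n1) (hpq : p + q ≤ n2) (hq3 : q ≤ n3),
  ∃ (d1 : (Fin n1 → R) →ₗ[R] R) (d2 : (Fin n2 → R) →ₗ[R] (Fin n1 → R))
    (d3 : (Fin n3 → R) →ₗ[R] (Fin n2 → R))
    (m11 : (Fin n1 → R) →ₗ[R] (Fin n1 → R) →ₗ[R] (Fin n2 → R))
    (m12 : (Fin n1 → R) →ₗ[R] (Fin n2 → R) →ₗ[R] (Fin n3 → R)),
    LinearMap.range d1 = J ∧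
    LinearMap.ker d1 = LinearMap.range d2 ∧
    LinearMap.ker d2 = LinearMap.range d3 ∧
    LinearMap.ker d3 = ⊥ ∧
    (∀ v, d1 v ∈ maximalIdeal R) ∧
    (∀ v, d2 v ∈ maximalIdeal R • (⊤ : Submodule R (Fin n1 → R))) ∧
    (∀ v, d3 v ∈ maximalIdeal R • (⊤ : Submodule R (Fin n2 → R))) ∧
    (∀ a b, d2 (m11 a b) = d1 a • b - d1 b • a) ∧
    (∀ a, m11 a a = 0) ∧ (∀ a b, m11 a b = - m11 b a) ∧
    (∀ a z, d3 (m12 a z) = d1 a • z - m11 a (d2 z)) ∧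
    (∀ a b c, m12 c (m11 a b) = m12 a (m11 b c)) ∧
    -- H(p,q) normal form for the induced products on `F ⊗ k`
    (∀ b : Fin n1, ∀ hb : (b : ℕ) < p,
      m11 (Pi.single (⟨p, hp⟩ : Fin n1) 1) (Pi.single b 1) -
        Pi.single (⟨(b : ℕ), by omega⟩ : Fin n2) 1 ∈
      maximalIdeal R • (⊤ : Submodule R (Fin n2 → R))) ∧
    (∀ a b : Fin n1, ¬((a : ℕ) = p ∧ (b : ℕ) < p) → ¬((b : ℕ) = p ∧ (a : ℕ) < p) →
      m11 (Pi.single a 1) (Pi.single b 1) ∈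
        maximalIdeal R • (⊤ : Submodule R (Fin n2 → R))) ∧
    (∀ b : Fin n2, ∀ hb1 : p ≤ (b : ℕ), ∀ hb2 : (b : ℕ) < p + q,
      m12 (Pi.single (⟨p, hp⟩ : Fin n1) 1) (Pi.single b 1) -
        Pi.single (⟨(b : ℕ) - p, by omega⟩ : Fin n3) 1 ∈
      maximalIdeal R • (⊤ : Submodule R (Fin n3 → R))) ∧
    (∀ (a : Fin n1) (b : Fin n2), ¬((a : ℕ) = p ∧ p ≤ (b : ℕ) ∧ (b : ℕ) < p + q) →
      m12 (Pi.single a 1) (Pi.single b 1) ∈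
        maximalIdeal R • (⊤ : Submodule R (Fin n3 → R)))

/-- `R/J` is a Golod ring: in the grade-3 setting of the paper this is equivalent
(Avramov–Kustin–Miller) to the multiplication on `Tor_+^R(R/J,k)` being trivial,
which is how it is encoded here: some minimal free resolution of `R/J` of length `≤ 3`
carries a DG-algebra structure all of whose products lie in `𝔪 • F`. -/
def IsGolodQuotient (J : Ideal R) : Prop :=
  ∃ (n1 n2 n3 : ℕ)
    (d1 : (Fin n1 → R) →ₗ[R] R) (d2 : (Fin n2 → R) →ₗ[R] (Fin n1 → R))
    (d3 : (Fin n3 → R) →ₗ[R] (Fin n2 → R))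
    (m11 : (Fin n1 → R) →ₗ[R] (Fin n1 → R) →ₗ[R] (Fin n2 → R))
    (m12 : (Fin n1 → R) →ₗ[R] (Fin n2 → R) →ₗ[R] (Fin n3 → R)),
    LinearMap.range d1 = J ∧
    LinearMap.ker d1 = LinearMap.range d2 ∧
    LinearMap.ker d2 = LinearMap.range d3 ∧
    LinearMap.ker d3 = ⊥ ∧
    (∀ v, d1 v ∈ maximalIdeal R) ∧
    (∀ v, d2 v ∈ maximalIdeal R • (⊤ : Submodule R (Fin n1 → R))) ∧
    (∀ v, d3 v ∈ maximalIdeal R • (⊤ : Submodule R (Fin n2 → R))) ∧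
    (∀ a b, d2 (m11 a b) = d1 a • b - d1 b • a) ∧
    (∀ a, m11 a a = 0) ∧ (∀ a b, m11 a b = - m11 b a) ∧
    (∀ a z, d3 (m12 a z) = d1 a • z - m11 a (d2 z)) ∧
    (∀ a b c, m12 c (m11 a b) = m12 a (m11 b c)) ∧
    -- trivial Tor multiplication
    (∀ a b, m11 a b ∈ maximalIdeal R • (⊤ : Submodule R (Fin n2 → R))) ∧
    (∀ a z, m12 a z ∈ maximalIdeal R • (⊤ : Submodule R (Fin n3 → R)))

end TorAlgebraClasses

section HilbertBurchExamples

variable {R : Type} [CommRing R]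

/-- The `p × (p-1)` matrix `X_p` (here `p = P+1`): the `c`-th column has
`x 0, x 1, x 2` (the paper's `x₁, x₂, x₃`) in rows `c, c+1, c+2` and `0` elsewhere. -/
def Xmat (x : Fin 3 → R) (P : ℕ) : Matrix (Fin (P + 1)) (Fin P) R :=
  Matrix.of fun l c =>
    if (l : ℕ) = (c : ℕ) then x 0
    else if (l : ℕ) = (c : ℕ) + 1 then x 1
    else if (l : ℕ) = (c : ℕ) + 2 then x 2
    else 0

/-- The signed maximal minors `Δ_i` of `X_p` (signed so that `∑ᵢ Δᵢ · (X_p)_{i,c} = 0`,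
i.e. the entries of the Hilbert–Burch differential `d₁`). -/
def minorDelta (x : Fin 3 → R) (P : ℕ) (i : Fin (P + 1)) : R :=
  (-1 : R) ^ (i : ℕ) * ((Xmat x P).submatrix i.succAbove id).det

/-- The ideal `J_p = I_{p-1}(X_p) + (x₃^{p-1})`, `p = P+1`. -/
def hilbJ (x : Fin 3 → R) (P : ℕ) : Ideal R :=
  Ideal.span (Set.range (minorDelta x P)) ⊔ Ideal.span {x 2 ^ P}

end HilbertBurchExamples


section HilbertBurchExamplesSquared

variable {R : Type} [CommRing R]

/-- The matrix `X'_p`: `X_p` with each entry squared. -/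
def Xmat' (x : Fin 3 → R) (P : ℕ) : Matrix (Fin (P + 1)) (Fin P) R :=
  Matrix.of fun l c =>
    if (l : ℕ) = (c : ℕ) then x 0 ^ 2
    else if (l : ℕ) = (c : ℕ) + 1 then x 1 ^ 2
    else if (l : ℕ) = (c : ℕ) + 2 then x 2 ^ 2
    else 0

/-- The signed maximal minors of `X'_p`. -/
def minorDelta' (x : Fin 3 → R) (P : ℕ) (i : Fin (P + 1)) : R :=
  (-1 : R) ^ (i : ℕ) * ((Xmat' x P).submatrix i.succAbove id).det

end HilbertBurchExamplesSquared

open IsLocalRing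

namespace TrimHB

/-- Elementwise form of a regular sequence of length three. -/
structure KReg {R : Type} [CommRing R] (x : Fin 3 → R) : Prop where
  r0 : ∀ a, x 0 * a = 0 → a = 0
  r1 : ∀ a b, x 1 * a = x 0 * b → ∃ c, a = x 0 * c
  r2 : ∀ a b c, x 2 * a = x 0 * b + x 1 * c → ∃ d e, a = x 0 * d + x 1 * e

theorem kreg_of_weakly {R : Type} [CommRing R] (a b c : R)
    (h : RingTheory.Sequence.IsWeaklyRegular R [a, b, c]) : KReg ![a, b, c] := by
  have h0 := h.regular_mod_prev 0 (by simp)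
  have h1 := h.regular_mod_prev 1 (by simp)
  have h2 := h.regular_mod_prev 2 (by simp)
  rw [isSMulRegular_iff_right_eq_zero_of_smul] at h0 h1 h2
  have key : ∀ (I : Ideal R) (r : R),
      (∀ v : R ⧸ (I • ⊤ : Submodule R R), r • v = 0 → v = 0) → ∀ u, r * u ∈ I → u ∈ I := by
    intro I r hI u hu
    have hh := hI (Submodule.Quotient.mk u) (by
      rw [← Submodule.Quotient.mk_smul, Submodule.Quotient.mk_eq_zero]
      simpa using hu)
    rw [Submodule.Quotient.mk_eq_zero] at hh
    simpa using hh
  have k0 := key _ _ h0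
  have k1 := key _ _ h1
  have k2 := key _ _ h2
  simp [Ideal.ofList] at k0 k1 k2
  refine ⟨?_, ?_, ?_⟩
  · intro u hu
    exact k0 u hu
  · intro u v huv
    simp only [Matrix.cons_val] at huv ⊢
    have := k1 u (Ideal.mem_span_singleton.2 ⟨v, huv⟩)
    exact Ideal.mem_span_singleton.1 this
  · intro u v w huv
    simp only [Matrix.cons_val] at huv ⊢
    have e : ({y | y = a ∨ y = b} : Set R) = {a, b} := by ext; simp
    rw [e] at k2
    have := k2 u (Ideal.mem_span_pair.2 ⟨v, w, by rw [huv]; ring⟩)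
    obtain ⟨d, e, h⟩ := Ideal.mem_span_pair.1 this
    exact ⟨d, e, by rw [← h]; ring⟩

section Koszul
variable {R : Type} [CommRing R] {x : Fin 3 → R}

theorem kz1 (hx : KReg x) (k : Fin 3 → R) (h : k 0 * x 0 + k 1 * x 1 + k 2 * x 2 = 0) :
    ∃ h : Fin 3 → R, k 0 = x 1 * h 2 - x 2 * h 1 ∧ k 1 = x 2 * h 0 - x 0 * h 2 ∧
      k 2 = x 0 * h 1 - x 1 * h 0 := by
  obtain ⟨a, b, hab⟩ := hx.r2 (k 2) (- k 0) (- k 1) (by linear_combination h)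
  obtain ⟨c, hc⟩ := hx.r1 (k 1 + b * x 2) (- (k 0 + a * x 2)) (by
    linear_combination h - x 2 * hab)
  have h0 := hx.r0 (k 0 + a * x 2 + c * x 1) (by
    linear_combination h - x 2 * hab - x 1 * hc)
  refine ⟨![-b, a, -c], ?_, ?_, ?_⟩ <;> simp only [Matrix.cons_val]
  · linear_combination h0
  · linear_combination hc
  · linear_combination hab

theorem kz2 (hx : KReg x) (h : Fin 3 → R) (_h0 : x 1 * h 2 - x 2 * h 1 = 0)
    (h1 : x 2 * h 0 - x 0 * h 2 = 0) (h2 : x 0 * h 1 - x 1 * h 0 = 0) :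
    ∃ r, ∀ l, h l = r * x l := by
  obtain ⟨r, hr⟩ := hx.r1 (h 0) (h 1) (by linear_combination -h2)
  have e1 := hx.r0 (h 1 - r * x 1) (by linear_combination h2 + x 1 * hr)
  have e2 := hx.r0 (h 2 - r * x 2) (by linear_combination -h1 + x 2 * hr)
  refine ⟨r, fun l => ?_⟩
  fin_cases l
  · simp only [Fin.zero_eta]; linear_combination hr
  · simp only [Fin.mk_one]; linear_combination e1
  · simp only [Fin.reduceFinMk]; linear_combination e2

variable [IsLocalRing R]

theorem xmem (hm : Ideal.span {x 0, x 1, x 2} = maximalIdeal R) (l : Fin 3) :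
    x l ∈ maximalIdeal R := by
  rw [← hm]; apply Ideal.subset_span; fin_cases l <;> simp

theorem kz1_mem (hx : KReg x) (hm : Ideal.span {x 0, x 1, x 2} = maximalIdeal R)
    (k : Fin 3 → R) (h : k 0 * x 0 + k 1 * x 1 + k 2 * x 2 = 0) (l : Fin 3) :
    k l ∈ maximalIdeal R := by
  obtain ⟨g, h0, h1, h2⟩ := kz1 hx k h
  have := xmem hm
  fin_cases l
  · simp only [Fin.zero_eta]; rw [h0]
    exact sub_mem (Ideal.mul_mem_right _ _ (this _)) (Ideal.mul_mem_right _ _ (this _))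
  · simp only [Fin.mk_one]; rw [h1]
    exact sub_mem (Ideal.mul_mem_right _ _ (this _)) (Ideal.mul_mem_right _ _ (this _))
  · simp only [Fin.reduceFinMk]; rw [h2]
    exact sub_mem (Ideal.mul_mem_right _ _ (this _)) (Ideal.mul_mem_right _ _ (this _))

/-- elements of `𝔪 * I` as combinations of the `x l` with coefficients in `I`. -/
theorem mem_mul_repr (hm : Ideal.span {x 0, x 1, x 2} = maximalIdeal R) (I : Ideal R) (r : R)
    (hr : r ∈ maximalIdeal R * I) :
    ∃ b : Fin 3 → R, (∀ l, b l ∈ I) ∧ b 0 * x 0 + b 1 * x 1 + b 2 * x 2 = r := by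
  rw [← hm] at hr
  have e : Ideal.span {x 0, x 1, x 2} = Ideal.span {x 0} ⊔ Ideal.span {x 1} ⊔ Ideal.span {x 2} := by
    rw [Ideal.span_insert, Ideal.span_insert, sup_assoc]
  rw [e, Ideal.sup_mul, Ideal.sup_mul] at hr
  obtain ⟨y, hy, z, hz, rfl⟩ := Submodule.mem_sup.1 hr
  obtain ⟨y', hy', w, hw, rfl⟩ := Submodule.mem_sup.1 hy
  obtain ⟨a, ha, rfl⟩ := Ideal.mem_span_singleton_mul.1 hy'
  obtain ⟨b, hb, rfl⟩ := Ideal.mem_span_singleton_mul.1 hw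
  obtain ⟨c, hc, rfl⟩ := Ideal.mem_span_singleton_mul.1 hz
  refine ⟨![a, b, c], fun l => ?_, ?_⟩
  · fin_cases l <;> assumption
  · simp only [Matrix.cons_val]; ring

theorem indep_sq (hx : KReg x) (hm : Ideal.span {x 0, x 1, x 2} = maximalIdeal R)
    (a : Fin 3 → R) (h : a 0 * x 0 + a 1 * x 1 + a 2 * x 2 ∈ maximalIdeal R ^ 2) (l : Fin 3) :
    a l ∈ maximalIdeal R := by
  rw [sq] at h
  obtain ⟨b, hb, e⟩ := mem_mul_repr hm _ _ h
  have := kz1_mem hx hm (a - b) (by simp only [Pi.sub_apply]; linear_combination -e) l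
  have h2 := add_mem this (hb l)
  simpa using h2

theorem kz1_sq (hx : KReg x) (hm : Ideal.span {x 0, x 1, x 2} = maximalIdeal R)
    (k : Fin 3 → R) (h : k 0 * x 0 + k 1 * x 1 + k 2 * x 2 = 0)
    (hk : ∀ l, k l ∈ maximalIdeal R ^ 2) :
    ∃ h : Fin 3 → R, (∀ l, h l ∈ maximalIdeal R) ∧
      k 0 = x 1 * h 2 - x 2 * h 1 ∧ k 1 = x 2 * h 0 - x 0 * h 2 ∧
      k 2 = x 0 * h 1 - x 1 * h 0 := by
  obtain ⟨g, h0, h1, h2⟩ := kz1 hx k h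
  have a := indep_sq hx hm ![0, g 2, - g 1] (by
    have := hk 0; rw [h0] at this; convert this using 1; simp only [Matrix.cons_val]; ring)
  have b := indep_sq hx hm ![-g 2, 0, g 0] (by
    have := hk 1; rw [h1] at this; convert this using 1; simp only [Matrix.cons_val]; ring)
  refine ⟨g, fun l => ?_, h0, h1, h2⟩
  fin_cases l
  · simpa using b 2
  · simpa using a 2
  · simpa using a 1

theorem r_mem_of (hx : KReg x) (hm : Ideal.span {x 0, x 1, x 2} = maximalIdeal R)
    (r : R) (h : r * x 0 ∈ maximalIdeal R ^ 2) : r ∈ maximalIdeal R := by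
  have := indep_sq hx hm ![r, 0, 0] (by simpa using h) 0
  simpa using this

end Koszul
end TrimHB

open IsLocalRing

namespace TrimHB
section HB
variable {S : Type} [CommRing S] (y : Fin 3 → S) {P : ℕ}

/-- extension by zero of a vector to a sequence -/
def ext0 (w : Fin P → S) (n : ℕ) : S := if h : n < P then w ⟨n, h⟩ else 0

theorem sum_ext0 (w : Fin P → S) (a : S) (n k : ℕ) :
    ∑ c : Fin P, (if n = (c : ℕ) + k then a * w c else 0)
      = if k ≤ n then a * ext0 w (n - k) else 0 := by
  by_cases hk : k ≤ n
  · by_cases h : n - k < P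
    · rw [Finset.sum_eq_single (⟨n - k, h⟩ : Fin P)]
      · simp [ext0, h, hk]
      · intro b _ hb
        rw [if_neg]
        intro hn
        apply hb
        ext; simp; omega
      · simp
    · rw [Finset.sum_eq_zero]
      · simp [ext0, h]
      · intro c _
        rw [if_neg]
        have := c.2
        omega
  · rw [Finset.sum_eq_zero]
    · simp [hk]
    · intro c _
      rw [if_neg]
      omega

theorem mulVec_X (w : Fin P → S) (l : Fin (P + 1)) :
    (Xmat y P).mulVec w l = y 0 * ext0 w l + (if 1 ≤ (l : ℕ) then y 1 * ext0 w (l - 1) else 0)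
      + (if 2 ≤ (l : ℕ) then y 2 * ext0 w (l - 2) else 0) := by
  have e0 := sum_ext0 w (y 0) l 0
  have e1 := sum_ext0 w (y 1) l 1
  have e2 := sum_ext0 w (y 2) l 2
  simp only [Nat.zero_le, if_true, Nat.sub_zero] at e0
  rw [← e0, ← e1, ← e2, ← Finset.sum_add_distrib, ← Finset.sum_add_distrib]
  simp only [Matrix.mulVec, dotProduct, Xmat, Matrix.of_apply]
  refine Finset.sum_congr rfl fun c _ => ?_
  by_cases h0 : (l : ℕ) = c
  · simp [h0]
  · by_cases h1 : (l : ℕ) = c + 1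
    · simp [h1]
    · by_cases h2 : (l : ℕ) = c + 2
      · simp [h2]
      · simp [h0, h1, h2]

theorem ext0_apply (w : Fin P → S) (c : Fin P) : ext0 w c = w c := by simp [ext0]

theorem X_inj (h0 : ∀ a, y 0 * a = 0 → a = 0) (w : Fin P → S) (hw : (Xmat y P).mulVec w = 0) :
    w = 0 := by
  have key : ∀ n, ext0 w n = 0 := by
    intro n
    induction n using Nat.strong_induction_on with
    | _ n ih =>
      by_cases hn : n < P
      · have := congrFun hw ⟨n, by omega⟩
        rw [mulVec_X] at this
        apply h0
        by_cases h1 : 1 ≤ n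
        · by_cases h2 : 2 ≤ n
          · simpa [h1, h2, ih (n - 1) (by omega), ih (n - 2) (by omega)] using this
          · simpa [h1, h2, ih (n - 1) (by omega)] using this
        · have h2 : ¬ 2 ≤ n := by omega
          simpa [h1, h2] using this
      · simp [ext0, hn]
  funext c
  rw [← ext0_apply w c, key]; rfl

theorem X_div (h1 : ∀ a b, y 1 * a = y 0 * b → ∃ c, a = y 0 * c) (w : Fin P → S)
    (hw : ∀ l, y 0 ∣ (Xmat y P).mulVec w l) : ∃ w', w = y 0 • w' := by
  have key : ∀ n, y 0 ∣ ext0 w n := by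
    intro n
    induction n using Nat.strong_induction_on with
    | _ n ih =>
      by_cases hn : n < P
      · obtain ⟨t, ht⟩ := hw ⟨n + 1, by omega⟩
        rw [mulVec_X] at ht
        simp only [le_add_iff_nonneg_left, zero_le, if_true, Nat.add_sub_cancel] at ht
        by_cases h2 : 2 ≤ n + 1
        · rw [if_pos h2] at ht
          obtain ⟨s, hs⟩ := ih (n + 1 - 2) (by omega)
          rw [hs] at ht
          exact h1 _ (t - ext0 w (n + 1) - y 2 * s) (by linear_combination ht)
        · rw [if_neg h2] at ht
          exact h1 _ (t - ext0 w (n + 1)) (by linear_combination ht)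
      · simp [ext0, hn]
  choose f hf using key
  refine ⟨fun c => f c, ?_⟩
  funext c
  rw [← ext0_apply w c, hf]; rfl

/-- the square matrix `[u | X]` -/
def Mu (u : Fin (P + 1) → S) : Matrix (Fin (P + 1)) (Fin (P + 1)) S :=
  Matrix.of fun l => Fin.cons (u l) (Xmat y P l)

theorem det_Mu (u : Fin (P + 1) → S) : (Mu y u).det = ∑ i, minorDelta y P i * u i := by
  rw [Matrix.det_succ_column_zero]
  refine Finset.sum_congr rfl fun i _ => ?_
  have : (Mu y u).submatrix i.succAbove Fin.succ = (Xmat y P).submatrix i.succAbove id := by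
    ext a b; simp [Mu]
  rw [this]
  simp only [minorDelta, Mu, Matrix.of_apply, Fin.cons_zero]
  ring

/-- the row of signed minors, as a linear map -/
def dlt : (Fin (P + 1) → S) →ₗ[S] S where
  toFun u := ∑ i, minorDelta y P i * u i
  map_add' u v := by simp [mul_add, Finset.sum_add_distrib]
  map_smul' a u := by
    simp only [Pi.smul_apply, smul_eq_mul, Finset.mul_sum, RingHom.id_apply]
    exact Finset.sum_congr rfl fun i _ => by ring

theorem dlt_apply (u : Fin (P + 1) → S) : dlt y u = ∑ i, minorDelta y P i * u i := rfl

theorem dlt_single (i : Fin (P + 1)) : dlt y (Pi.single i 1) = minorDelta y P i := by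
  rw [dlt_apply, Finset.sum_eq_single i] <;> simp +contextual

theorem dlt_X (w : Fin P → S) : dlt y ((Xmat y P).mulVec w) = 0 := by
  have h : ∀ c, dlt y ((Xmat y P).mulVec (Pi.single c 1)) = 0 := by
    intro c
    rw [dlt_apply, ← det_Mu]
    apply Matrix.det_zero_of_column_eq (i := 0) (j := c.succ) (Fin.succ_ne_zero c).symm
    intro k
    simp [Mu, Matrix.col_apply]
  have hh : (dlt y) ∘ₗ (Xmat y P).mulVecLin = 0 := by
    apply LinearMap.pi_ext'
    intro c
    ext
    simpa using h c
  exact LinearMap.congr_fun hh w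

theorem Mu_mulVec (u : Fin (P + 1) → S) (t : Fin (P + 1) → S) :
    (Mu y u).mulVec t = t 0 • u + (Xmat y P).mulVec (Fin.tail t) := by
  funext l
  simp only [Matrix.mulVec, dotProduct, Mu, Matrix.of_apply, Pi.add_apply, Pi.smul_apply,
    smul_eq_mul]
  rw [Fin.sum_univ_succ]
  simp [Fin.tail, mul_comm]

theorem exists_W0 (u v : Fin (P + 1) → S) :
    (Xmat y P).mulVec (Fin.tail ((Mu y u).cramer v)) = dlt y u • v - dlt y v • u := by
  have h := Matrix.mulVec_cramer (Mu y u) v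
  rw [Mu_mulVec, det_Mu] at h
  have h0 : (Mu y u).cramer v 0 = dlt y v := by
    rw [Matrix.cramer_apply, dlt_apply, ← det_Mu]
    congr 1
    ext a b
    refine Fin.cases ?_ (fun b => ?_) b
    · simp [Mu]
    · simp [Mu]
  rw [h0] at h
  rw [dlt_apply y u, ← h]; abel

theorem det_mem_pow {n : Type} [Fintype n] [DecidableEq n] (A : Matrix n n S) (I : Ideal S)
    (s : Finset n) (h : ∀ c ∈ s, ∀ l, A l c ∈ I) : A.det ∈ I ^ s.card := by
  rw [Matrix.det_apply]
  refine sum_mem fun τ _ => ?_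
  have : ∏ i, A (τ i) i ∈ I ^ s.card := by
    rw [← Finset.prod_mul_prod_compl s]
    apply Ideal.mul_mem_right
    rw [← Finset.prod_const]
    exact Ideal.prod_mem_prod fun c hc => h c hc _
  rcases Int.units_eq_one_or (Equiv.Perm.sign τ) with h | h <;> rw [h]
  · simpa using this
  · simpa using this

theorem X_mem (I : Ideal S) (hy : ∀ l, y l ∈ I) (l : Fin (P + 1)) (c : Fin P) :
    Xmat y P l c ∈ I := by
  simp only [Xmat, Matrix.of_apply]
  split_ifs <;> simp [hy]

theorem W0_mem (I : Ideal S) (hy : ∀ l, y l ∈ I) (u v : Fin (P + 1) → S) (c : Fin P) :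
    Fin.tail ((Mu y u).cramer v) c ∈ I ^ (P - 1) := by
  have := det_mem_pow ((Mu y u).updateCol c.succ v) I ({0, c.succ}ᶜ : Finset (Fin (P + 1))) (by
    intro d hd l
    simp only [Finset.mem_compl, Finset.mem_insert, Finset.mem_singleton, not_or] at hd
    rw [Matrix.updateCol_apply, if_neg hd.2]
    obtain ⟨e, rfl⟩ := Fin.exists_succ_eq.2 hd.1
    simp only [Mu, Matrix.of_apply, Fin.cons_succ]
    exact X_mem y I hy l e)
  rw [Finset.card_compl, Finset.card_pair (Fin.succ_ne_zero c).symm, Fintype.card_fin] at this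
  simp only [Fin.tail, Matrix.cramer_apply]
  exact this

theorem delta_mem (I : Ideal S) (hy : ∀ l, y l ∈ I) (i : Fin (P + 1)) :
    minorDelta y P i ∈ I ^ P := by
  apply Ideal.mul_mem_left
  have := det_mem_pow ((Xmat y P).submatrix i.succAbove id) I Finset.univ (by
    intro c _ l
    exact X_mem y I hy _ _)
  simpa using this

theorem delta_last : minorDelta y P (Fin.last P) = (-1) ^ P * y 0 ^ P := by
  unfold minorDelta
  rw [Matrix.det_of_isLowerTriangular]
  · simp [Xmat]
  · intro i j hij
    have hij' : (i : ℕ) < j := hij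
    simp only [Matrix.submatrix_apply, Fin.succAbove_last, id, Xmat, Matrix.of_apply,
      Fin.val_castSucc]
    rw [if_neg (by omega), if_neg (by omega), if_neg (by omega)]

theorem hb_exact (h0 : ∀ a, y 0 * a = 0 → a = 0)
    (h1 : ∀ a b, y 1 * a = y 0 * b → ∃ c, a = y 0 * c) (v : Fin (P + 1) → S)
    (hv : dlt y v = 0) : ∃ w, (Xmat y P).mulVec w = v := by
  have key : ∀ n (v : Fin (P + 1) → S), (∃ w, (Xmat y P).mulVec w = y 0 ^ n • v) →
      ∃ w, (Xmat y P).mulVec w = v := by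
    intro n
    induction n with
    | zero => intro v h; simpa using h
    | succ n ih =>
      rintro v ⟨w, hw⟩
      obtain ⟨w', rfl⟩ := X_div y h1 w (fun l => ⟨y 0 ^ n * v l, by rw [hw]; simp; ring⟩)
      apply ih
      refine ⟨w', ?_⟩
      rw [Matrix.mulVec_smul] at hw
      funext l
      have := congrFun hw l
      simp only [Pi.smul_apply, smul_eq_mul] at this ⊢
      have := h0 ((Xmat y P).mulVec w' l - y 0 ^ n * v l) (by linear_combination this)
      linear_combination this
  apply key P
  have := exists_W0 y (Pi.single (Fin.last P) 1) v
  rw [hv, dlt_single, delta_last, zero_smul, sub_zero] at this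
  refine ⟨((-1 : S) ^ P) • Fin.tail ((Mu y (Pi.single (Fin.last P) 1)).cramer v), ?_⟩
  rw [Matrix.mulVec_smul, this, smul_smul, ← mul_assoc, ← mul_pow]
  simp

end HB

section HB2

theorem sq_reg {S : Type} [CommRing S] (p q : S) (h0 : ∀ a, p * a = 0 → a = 0)
    (h1 : ∀ a b, q * a = p * b → ∃ c, a = p * c) :
    (∀ a, p ^ 2 * a = 0 → a = 0) ∧ (∀ a b, q ^ 2 * a = p ^ 2 * b → ∃ c, a = p ^ 2 * c) := by
  have h1' : ∀ a b, q ^ 2 * a = p * b → ∃ c, a = p * c := by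
    intro a b h
    obtain ⟨c, hc⟩ := h1 (q * a) b (by linear_combination h)
    exact h1 a c hc
  refine ⟨fun a h => h0 _ (h0 _ (by linear_combination h)), fun a b h => ?_⟩
  obtain ⟨c, rfl⟩ := h1' a (p * b) (by linear_combination h)
  have := h0 (q ^ 2 * c - p * b) (by linear_combination h)
  obtain ⟨d, rfl⟩ := h1' c b (by linear_combination this)
  exact ⟨d, by ring⟩

theorem minorDelta_map {R S : Type} [CommRing R] [CommRing S] (f : R →+* S) (y : Fin 3 → R)
    (P : ℕ) (i : Fin (P + 1)) : minorDelta (fun l => f (y l)) P i = f (minorDelta y P i) := by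
  unfold minorDelta
  rw [map_mul, map_pow, map_neg, map_one, RingHom.map_det]
  congr 3
  ext a b
  simp only [Matrix.submatrix_apply, Xmat, Matrix.of_apply, RingHom.mapMatrix_apply,
    Matrix.map_apply]
  split_ifs <;> simp

variable {R : Type} [CommRing R] {P : ℕ}

/-- If `y 0, y 1` is regular modulo the regular element `t`, then `t` is regular modulo the
ideal of maximal minors. -/
theorem t_reg (y : Fin 3 → R) (t : R) (ht : ∀ a, t * a = 0 → a = 0)
    (h0 : ∀ a b, y 0 * a = t * b → ∃ c, a = t * c)
    (h1 : ∀ a b c, y 1 * a = t * b + y 0 * c → ∃ d e, a = t * d + y 0 * e)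
    (r : R) (v : Fin (P + 1) → R) (h : t * r = dlt y v) : ∃ u : Fin (P + 1) → R, r = dlt y u := by
  let f := Ideal.Quotient.mk (Ideal.span {t})
  have hf0 : ∀ a, f a = 0 ↔ ∃ b, a = t * b := fun a => by
    rw [Ideal.Quotient.eq_zero_iff_mem, Ideal.mem_span_singleton]; rfl
  have hfs : Function.Surjective f := Ideal.Quotient.mk_surjective
  obtain ⟨w, hw⟩ := hb_exact (P := P) (fun l => f (y l)) (by
      intro a ha
      obtain ⟨a, rfl⟩ := hfs a
      rw [← map_mul, hf0] at ha
      obtain ⟨b, hb⟩ := ha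
      exact (hf0 _).2 (h0 _ _ hb)) (by
      intro a b hab
      obtain ⟨a, rfl⟩ := hfs a
      obtain ⟨b, rfl⟩ := hfs b
      rw [← map_mul, ← map_mul, ← sub_eq_zero, ← map_sub, hf0] at hab
      obtain ⟨c, hc⟩ := hab
      obtain ⟨d, e, rfl⟩ := h1 a c b (by linear_combination hc)
      refine ⟨f e, ?_⟩
      have : f t = 0 := (hf0 t).2 ⟨1, by simp⟩
      simp [this]) (fun i => f (v i)) (by
      rw [dlt_apply]
      simp_rw [minorDelta_map, ← map_mul]
      rw [← map_sum, ← dlt_apply, ← h]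
      exact (hf0 _).2 ⟨r, rfl⟩)
  choose g hg using fun c => hfs (w c)
  have : ∀ l, ∃ b, v l - (Xmat y P).mulVec g l = t * b := by
    intro l
    rw [← hf0, map_sub, sub_eq_zero, ← congrFun hw l]
    simp only [Matrix.mulVec, dotProduct, map_sum, map_mul]
    refine Finset.sum_congr rfl fun c _ => ?_
    rw [hg]
    congr 1
    simp only [Xmat, Matrix.of_apply]
    split_ifs <;> simp
  choose u hu using this
  refine ⟨u, ?_⟩
  have hv : v = (Xmat y P).mulVec g + t • u := by
    funext l
    have := hu l
    simp only [Pi.add_apply, Pi.smul_apply, smul_eq_mul]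
    linear_combination this
  rw [hv, map_add, dlt_X, map_smul, smul_eq_mul, zero_add] at h
  have := ht (r - dlt y u) (by linear_combination h)
  linear_combination this

theorem t_reg_pow (y : Fin 3 → R) (t : R)
    (H : ∀ (r : R) (v : Fin (P + 1) → R), t * r = dlt y v → ∃ u : Fin (P + 1) → R, r = dlt y u) (n : ℕ) :
    ∀ (r : R) (v : Fin (P + 1) → R), t ^ n * r = dlt y v → ∃ u : Fin (P + 1) → R, r = dlt y u := by
  induction n with
  | zero => intro r v h; exact ⟨v, by simpa using h⟩
  | succ n ih =>
    intro r v h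
    obtain ⟨u, hu⟩ := H (t ^ n * r) v (by rw [← h]; ring)
    exact ih r u hu

end HB2
end TrimHB

open IsLocalRing

namespace TrimHB

section Lin
variable {R : Type} [CommRing R]

theorem map_mem_smul_top {M N : Type} [AddCommGroup M] [AddCommGroup N] [Module R M] [Module R N]
    (I : Ideal R) (f : M →ₗ[R] N) {v : M} (hv : v ∈ I • (⊤ : Submodule R M)) :
    f v ∈ I • (⊤ : Submodule R N) := by
  have : f v ∈ Submodule.map f (I • ⊤) := Submodule.mem_map_of_mem hv
  rw [Submodule.map_smul''] at this
  exact Submodule.smul_mono le_rfl le_top this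

theorem smul_top_smul {M : Type} [AddCommGroup M] [Module R M] (I : Ideal R) {a : R} (ha : a ∈ I)
    (v : M) : a • v ∈ I • (⊤ : Submodule R M) :=
  Submodule.smul_mem_smul ha trivial

theorem pi_mem_smul_top {ι : Type} [Finite ι] (I : Ideal R) {v : ι → R} (hv : ∀ i, v i ∈ I) :
    v ∈ I • (⊤ : Submodule R (ι → R)) := by
  classical
  have := Fintype.ofFinite ι
  rw [pi_eq_sum_univ' v]
  exact sum_mem fun i _ => smul_top_smul I (hv i) _

theorem prod_mem_smul_top {M N : Type} [AddCommGroup M] [AddCommGroup N] [Module R M] [Module R N]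
    (I : Ideal R) {v : M × N} (h1 : v.1 ∈ I • (⊤ : Submodule R M))
    (h2 : v.2 ∈ I • (⊤ : Submodule R N)) : v ∈ I • (⊤ : Submodule R (M × N)) := by
  have e : v = LinearMap.inl R M N v.1 + LinearMap.inr R M N v.2 := by ext <;> simp
  rw [e]
  exact add_mem (map_mem_smul_top I _ h1) (map_mem_smul_top I _ h2)

theorem smul_top_pi {ι : Type} (I : Ideal R) {v : ι → R}
    (hv : v ∈ I • (⊤ : Submodule R (ι → R))) (i : ι) : v i ∈ I := by
  have := map_mem_smul_top I (LinearMap.proj (R := R) (φ := fun _ : ι => R) i) hv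
  simpa using this

theorem exists_lift₂ {M N Q P : Type} [AddCommGroup M] [AddCommGroup N] [AddCommGroup Q]
    [AddCommGroup P] [Module R M] [Module R N] [Module R Q] [Module R P]
    (B : M →ₗ[R] N →ₗ[R] P) (d : Q →ₗ[R] P) (hd : ∀ w, d w = 0 → w = 0)
    (h : ∀ a z, ∃ w, d w = B a z) : ∃ m : M →ₗ[R] N →ₗ[R] Q, ∀ a z, d (m a z) = B a z := by
  choose f hf using h
  have inj : ∀ u v, d u = d v → u = v := fun u v huv =>
    sub_eq_zero.1 (hd _ (by rw [map_sub, huv, sub_self]))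
  refine ⟨LinearMap.mk₂ R f ?_ ?_ ?_ ?_, fun a z => hf a z⟩ <;>
  · intros
    apply inj
    simp [hf]

theorem exists_alt_lift {ι : Type} [Fintype ι] [LinearOrder ι] {N P : Type} [AddCommGroup N]
    [AddCommGroup P] [Module R N] [Module R P]
    (B : (ι → R) →ₗ[R] (ι → R) →ₗ[R] P) (hB : ∀ a, B a a = 0) (g : N →ₗ[R] P)
    (h : ∀ i j, ∃ w, g w = B (Pi.single i 1) (Pi.single j 1)) :
    ∃ m : (ι → R) →ₗ[R] (ι → R) →ₗ[R] N, (∀ a b, g (m a b) = B a b) ∧ ∀ a, m a a = 0 := by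
  choose w hw using h
  have hB' : ∀ a b, B a b = - B b a := by
    intro a b
    have := hB (a + b)
    simp only [map_add, LinearMap.add_apply, hB, zero_add, add_zero] at this
    exact eq_neg_of_add_eq_zero_right this
  let m : (ι → R) →ₗ[R] (ι → R) →ₗ[R] N := LinearMap.mk₂ R
    (fun a b => ∑ i, ∑ j, if i < j then (a i * b j - a j * b i) • w i j else 0)
    (by
      intro a a' b
      rw [← Finset.sum_add_distrib]
      refine Finset.sum_congr rfl fun i _ => ?_
      rw [← Finset.sum_add_distrib]
      refine Finset.sum_congr rfl fun j _ => ?_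
      split_ifs
      · rw [← add_smul]; congr 1; simp; ring
      · simp)
    (by
      intro c a b
      rw [Finset.smul_sum]
      refine Finset.sum_congr rfl fun i _ => ?_
      rw [Finset.smul_sum]
      refine Finset.sum_congr rfl fun j _ => ?_
      split_ifs
      · rw [smul_smul]; congr 1; simp; ring
      · simp)
    (by
      intro a b b'
      rw [← Finset.sum_add_distrib]
      refine Finset.sum_congr rfl fun i _ => ?_
      rw [← Finset.sum_add_distrib]
      refine Finset.sum_congr rfl fun j _ => ?_
      split_ifs
      · rw [← add_smul]; congr 1; simp; ring
      · simp)
    (by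
      intro c a b
      rw [Finset.smul_sum]
      refine Finset.sum_congr rfl fun i _ => ?_
      rw [Finset.smul_sum]
      refine Finset.sum_congr rfl fun j _ => ?_
      split_ifs
      · rw [smul_smul]; congr 1; simp; ring
      · simp)
  have hm : ∀ a b, m a b = ∑ i, ∑ j, if i < j then (a i * b j - a j * b i) • w i j else 0 :=
    fun _ _ => rfl
  refine ⟨m, ?_, ?_⟩
  · have hs : ∀ a b, a < b → m (Pi.single a 1) (Pi.single b 1) = w a b := by
      intro a b hab
      rw [hm, Finset.sum_eq_single a, Finset.sum_eq_single b]
      · rw [if_pos hab]; simp [hab.ne, hab.ne']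
      · intro j _ hj
        split_ifs with h
        · simp [hj, h.ne', hab.ne]
        · rfl
      · simp
      · intro i _ hi
        apply Finset.sum_eq_zero
        intro j _
        split_ifs with h
        · rcases eq_or_ne i b with rfl | hib
          · have : j ≠ a := (hab.trans h).ne'
            simp [hi, this]
          · simp [hi, hib]
        · rfl
      · simp
    have ha : ∀ a b, m a b = - m b a := by
      intro a b
      rw [hm, hm, ← Finset.sum_neg_distrib]
      refine Finset.sum_congr rfl fun i _ => ?_
      rw [← Finset.sum_neg_distrib]
      refine Finset.sum_congr rfl fun j _ => ?_
      split_ifs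
      · rw [← neg_smul]; congr 1; ring
      · simp
    have h0 : ∀ a, m a a = 0 := by
      intro a
      rw [hm]
      refine Finset.sum_eq_zero fun i _ => Finset.sum_eq_zero fun j _ => ?_
      split_ifs
      · rw [mul_comm, sub_self, zero_smul]
      · rfl
    have key : m.compr₂ g = B := by
      apply LinearMap.pi_ext'
      intro a
      ext1
      apply LinearMap.pi_ext'
      intro b
      ext1
      simp only [LinearMap.coe_comp, Function.comp_apply, LinearMap.coe_single,
        LinearMap.compr₂_apply]
      rcases lt_trichotomy a b with h | h | h
      · rw [hs a b h, hw]
      · subst h; rw [h0, hB, map_zero]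
      · rw [ha, hs b a h, map_neg, hw, ← hB']
    intro a b
    rw [← key]; rfl
  · intro a
    rw [hm]
    refine Finset.sum_eq_zero fun i _ => Finset.sum_eq_zero fun j _ => ?_
    split_ifs
    · rw [mul_comm, sub_self, zero_smul]
    · rfl

/-- A length three resolution with an alternating product in degree one. -/
structure DGR (R : Type) [CommRing R] (J : Ideal R) (M1 M2 M3 : Type) [AddCommGroup M1]
    [AddCommGroup M2] [AddCommGroup M3] [Module R M1] [Module R M2] [Module R M3] where
  d1 : M1 →ₗ[R] R
  d2 : M2 →ₗ[R] M1
  d3 : M3 →ₗ[R] M2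
  m11 : M1 →ₗ[R] M1 →ₗ[R] M2
  range1 : LinearMap.range d1 = J
  dd1 : ∀ v, d1 (d2 v) = 0
  ex1 : ∀ v, d1 v = 0 → ∃ w, d2 w = v
  dd2 : ∀ v, d2 (d3 v) = 0
  ex2 : ∀ v, d2 v = 0 → ∃ w, d3 w = v
  inj3 : ∀ v, d3 v = 0 → v = 0
  leib : ∀ a b, d2 (m11 a b) = d1 a • b - d1 b • a
  alt : ∀ a, m11 a a = 0

namespace DGR
variable {J : Ideal R} {M1 M2 M3 : Type} [AddCommGroup M1]
    [AddCommGroup M2] [AddCommGroup M3] [Module R M1] [Module R M2] [Module R M3]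

theorem anti (D : DGR R J M1 M2 M3) (a b : M1) : D.m11 a b = - D.m11 b a := by
  have := D.alt (a + b)
  simp only [map_add, LinearMap.add_apply, D.alt, zero_add, add_zero] at this
  exact eq_neg_of_add_eq_zero_right this

theorem exists_m12 (D : DGR R J M1 M2 M3) : ∃ m12 : M1 →ₗ[R] M2 →ₗ[R] M3,
    (∀ a z, D.d3 (m12 a z) = D.d1 a • z - D.m11 a (D.d2 z)) ∧
    (∀ a b c, m12 c (D.m11 a b) = m12 a (D.m11 b c)) := by
  obtain ⟨m, hm⟩ := exists_lift₂
    (((LinearMap.lsmul R M2).comp D.d1) - (D.m11.compl₂ D.d2)) D.d3 D.inj3 (by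
      intro a z
      apply D.ex2
      simp [D.leib, D.dd1])
  have hm' : ∀ a z, D.d3 (m a z) = D.d1 a • z - D.m11 a (D.d2 z) := by
    intro a z; rw [hm]; simp
  refine ⟨m, hm', fun a b c => ?_⟩
  rw [← sub_eq_zero]
  apply D.inj3
  rw [map_sub, hm', hm', D.leib, D.leib, map_sub, map_sub, map_smul, map_smul, map_smul, map_smul,
    D.anti c b, D.anti c a]
  module

/-- transport along linear equivalences -/
def congr (D : DGR R J M1 M2 M3) {N1 N2 N3 : Type} [AddCommGroup N1]
    [AddCommGroup N2] [AddCommGroup N3] [Module R N1] [Module R N2] [Module R N3]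
    (L1 : M1 ≃ₗ[R] N1) (L2 : M2 ≃ₗ[R] N2) (L3 : M3 ≃ₗ[R] N3) : DGR R J N1 N2 N3 where
  d1 := D.d1 ∘ₗ L1.symm.toLinearMap
  d2 := L1.toLinearMap ∘ₗ D.d2 ∘ₗ L2.symm.toLinearMap
  d3 := L2.toLinearMap ∘ₗ D.d3 ∘ₗ L3.symm.toLinearMap
  m11 := (D.m11.compl₁₂ L1.symm.toLinearMap L1.symm.toLinearMap).compr₂ L2.toLinearMap
  range1 := by
    rw [LinearMap.range_comp_of_range_eq_top _ (LinearEquiv.range _), D.range1]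
  dd1 v := by simp [D.dd1]
  ex1 v hv := by
    obtain ⟨w, hw⟩ := D.ex1 (L1.symm v) hv
    exact ⟨L2 w, by simp [hw]⟩
  dd2 v := by simp [D.dd2]
  ex2 v hv := by
    obtain ⟨w, hw⟩ := D.ex2 (L2.symm v) (by simpa using hv)
    exact ⟨L3 w, by simp [hw]⟩
  inj3 v hv := by
    have := D.inj3 (L3.symm v) (by simpa using hv)
    simpa using this
  leib a b := by simp [D.leib]
  alt a := by simp [D.alt]

/-- reduction along a special deformation retract -/
def reduce (D : DGR R J M1 M2 M3) {N1 N2 : Type} [AddCommGroup N1]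
    [AddCommGroup N2] [Module R N1] [Module R N2]
    (i1 : N1 →ₗ[R] M1) (p1 : M1 →ₗ[R] N1) (i2 : N2 →ₗ[R] M2) (p2 : M2 →ₗ[R] N2)
    (e : M1 →ₗ[R] M2)
    (h1 : ∀ v, p1 (i1 v) = v)
    (h3 : ∀ v, i1 (p1 v) + D.d2 (e v) = v) (h4 : ∀ v, i2 (p2 v) + e (D.d2 v) = v)
    (h2 : ∀ v, p2 (i2 v) = v) :
    DGR R J N1 N2 M3 :=
  have c2 : ∀ v, e (D.d2 (i2 v)) = 0 := by
    intro v
    have := h4 (i2 v)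
    rw [h2] at this
    exact add_eq_left.1 this
  have c1 : ∀ v, i1 (p1 (D.d2 (i2 v))) = D.d2 (i2 v) := by
    intro v
    have := h3 (D.d2 (i2 v))
    rwa [c2, map_zero, add_zero] at this
  have c3 : ∀ v, D.d1 (i1 (p1 v)) = D.d1 v := by
    intro v
    have := congrArg D.d1 (h3 v)
    rwa [map_add, D.dd1, add_zero] at this
  have c4 : ∀ v, p1 (D.d2 (i2 (p2 v))) = p1 (D.d2 v) := by
    intro v
    have a := congrArg D.d2 (h4 v)
    have b := h3 (D.d2 v)
    rw [map_add] at a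
    have : i1 (p1 (D.d2 v)) = i1 (p1 (D.d2 (i2 (p2 v)))) := by
      rw [c1]
      exact add_right_cancel (b.trans a.symm)
    have := congrArg p1 this
    rw [h1, h1] at this
    exact this.symm
  have c5 : ∀ v, i2 (p2 (D.d3 v)) = D.d3 v := by
    intro v
    have := h4 (D.d3 v)
    rwa [D.dd2, map_zero, add_zero] at this
  { d1 := D.d1 ∘ₗ i1
    d2 := p1 ∘ₗ D.d2 ∘ₗ i2
    d3 := p2 ∘ₗ D.d3
    m11 := (D.m11.compl₁₂ i1 i1).compr₂ p2
    range1 := by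
      refine Eq.trans ?_ D.range1
      apply le_antisymm
      · exact LinearMap.range_comp_le_range _ _
      · rintro _ ⟨v, rfl⟩
        exact ⟨p1 v, c3 v⟩
    dd1 := fun v => by simp [c3, D.dd1]
    ex1 := fun v hv => by
      obtain ⟨w, hw⟩ := D.ex1 (i1 v) hv
      exact ⟨p2 w, by simp [c4, hw, h1]⟩
    dd2 := fun v => by simp [c5, D.dd2]
    ex2 := fun v hv => by
      obtain ⟨w, hw⟩ := D.ex2 (i2 v) (by
        rw [← c1]
        have : p1 (D.d2 (i2 v)) = 0 := hv
        rw [this, map_zero])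
      exact ⟨w, by simp [hw, h2]⟩
    inj3 := fun v hv => by
      apply D.inj3
      rw [← c5]
      have : p2 (D.d3 v) = 0 := hv
      rw [this, map_zero]
    leib := fun a b => by simp [c4, D.leib, h1]
    alt := fun a => by simp [D.alt] }

end DGR

theorem exists_enum {ι κ γ : Type} [Fintype ι] [Fintype κ] [Fintype γ] (k : κ → ι) (g : γ → ι)
    (hk : Function.Injective k) (hg : Function.Injective g) (hkg : ∀ a b, k a ≠ g b) :
    ∃ (n : ℕ) (_ : Fintype.card κ + Fintype.card γ ≤ n) (e : ι ≃ Fin n),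
      (∀ i, (e (k i) : ℕ) = Fintype.equivFin κ i) ∧
      (∀ c, (e (g c) : ℕ) = Fintype.card κ + Fintype.equivFin γ c) := by
  classical
  have hinj : Function.Injective (Sum.elim k g) := hk.sumElim hg hkg
  let E : ι ≃ Fin (Fintype.card κ + Fintype.card γ +
      Fintype.card ((Set.range (Sum.elim k g))ᶜ : Set ι)) :=
    (Equiv.Set.sumCompl (Set.range (Sum.elim k g))).symm.trans
      ((Equiv.sumCongr ((Equiv.ofInjective _ hinj).symm.trans
        ((Equiv.sumCongr (Fintype.equivFin κ) (Fintype.equivFin γ)).trans finSumFinEquiv))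
        (Fintype.equivFin _)).trans finSumFinEquiv)
  have hE : ∀ s, E (Sum.elim k g s) = Fin.castAdd _ (finSumFinEquiv
      (Equiv.sumCongr (Fintype.equivFin κ) (Fintype.equivFin γ) s)) := by
    intro s
    simp only [E, Equiv.trans_apply]
    rw [Equiv.Set.sumCompl_symm_apply_of_mem (Set.mem_range_self s)]
    have : (Equiv.ofInjective (Sum.elim k g) hinj).symm ⟨Sum.elim k g s, Set.mem_range_self s⟩ = s :=
      Equiv.ofInjective_symm_apply hinj s
    simp [this]
  refine ⟨_, Nat.le_add_right _ _, E, fun i => ?_, fun c => ?_⟩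
  · have := hE (Sum.inl i)
    simp only [Sum.elim_inl] at this
    rw [this]; simp
  · have := hE (Sum.inr c)
    simp only [Sum.elim_inr] at this
    rw [this]; simp

end Lin
end TrimHB

open IsLocalRing

namespace TrimHB
section Final
variable {R : Type} [CommRing R] [IsLocalRing R] {J : Ideal R} {M1 M2 M3 : Type} [AddCommGroup M1]
    [AddCommGroup M2] [AddCommGroup M3] [Module R M1] [Module R M2] [Module R M3]

/-- minimality of a resolution -/
structure DGR.Min (D : DGR R J M1 M2 M3) : Prop where
  min1 : ∀ v, D.d1 v ∈ maximalIdeal R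
  min2 : ∀ v, D.d2 v ∈ maximalIdeal R • (⊤ : Submodule R M1)
  min3 : ∀ v, D.d3 v ∈ maximalIdeal R • (⊤ : Submodule R M2)

theorem DGR.Min.congr {D : DGR R J M1 M2 M3} (hD : D.Min) {N1 N2 N3 : Type} [AddCommGroup N1]
    [AddCommGroup N2] [AddCommGroup N3] [Module R N1] [Module R N2] [Module R N3]
    (L1 : M1 ≃ₗ[R] N1) (L2 : M2 ≃ₗ[R] N2) (L3 : M3 ≃ₗ[R] N3) : (D.congr L1 L2 L3).Min where
  min1 v := hD.min1 _
  min2 v := map_mem_smul_top _ L1.toLinearMap (hD.min2 _)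
  min3 v := map_mem_smul_top _ L2.toLinearMap (hD.min3 _)

/-- the products are, modulo the maximal ideal, given by `s`, `U`, `V`. -/
structure DGR.Prod (D : DGR R J M1 M2 M3) (s : M1 →ₗ[R] R) (U : M1 →ₗ[R] M2) (V : M2 →ₗ[R] M3) :
    Prop where
  p11 : ∀ a b, D.m11 a b - (s a • U b - s b • U a) ∈ maximalIdeal R • (⊤ : Submodule R M2)
  p12 : ∀ a z, ∃ w, D.d3 w = D.d1 a • z - D.m11 a (D.d2 z) ∧
    w - s a • V z ∈ maximalIdeal R • (⊤ : Submodule R M3)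

theorem DGR.Prod.congr {D : DGR R J M1 M2 M3} {s : M1 →ₗ[R] R} {U : M1 →ₗ[R] M2}
    {V : M2 →ₗ[R] M3} (hD : D.Prod s U V) {N1 N2 N3 : Type} [AddCommGroup N1]
    [AddCommGroup N2] [AddCommGroup N3] [Module R N1] [Module R N2] [Module R N3]
    (L1 : M1 ≃ₗ[R] N1) (L2 : M2 ≃ₗ[R] N2) (L3 : M3 ≃ₗ[R] N3) :
    (D.congr L1 L2 L3).Prod (s ∘ₗ L1.symm.toLinearMap)
      (L2.toLinearMap ∘ₗ U ∘ₗ L1.symm.toLinearMap)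
      (L3.toLinearMap ∘ₗ V ∘ₗ L2.symm.toLinearMap) where
  p11 a b := by
    have := map_mem_smul_top _ L2.toLinearMap (hD.p11 (L1.symm a) (L1.symm b))
    simpa [DGR.congr] using this
  p12 a z := by
    obtain ⟨w, h1, h2⟩ := hD.p12 (L1.symm a) (L2.symm z)
    refine ⟨L3 w, ?_, ?_⟩
    · simp [DGR.congr, h1]
    · have := map_mem_smul_top _ L3.toLinearMap h2
      simpa using this

theorem golod_fin {n1 n2 n3 : ℕ} (D : DGR R J (Fin n1 → R) (Fin n2 → R) (Fin n3 → R))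
    (hD : D.Min) (hP : D.Prod 0 0 0) : IsGolodQuotient R J := by
  obtain ⟨m12, h1, h2⟩ := D.exists_m12
  refine ⟨n1, n2, n3, D.d1, D.d2, D.d3, D.m11, m12, D.range1, ?_, ?_, ?_, hD.min1, hD.min2,
    hD.min3, D.leib, D.alt, D.anti, h1, h2, ?_, ?_⟩
  · ext v; exact ⟨fun h => D.ex1 v h, by rintro ⟨w, rfl⟩; exact D.dd1 w⟩
  · ext v; exact ⟨fun h => D.ex2 v h, by rintro ⟨w, rfl⟩; exact D.dd2 w⟩
  · rw [LinearMap.ker_eq_bot']; exact D.inj3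
  · intro a b; simpa using hP.p11 a b
  · intro a z
    obtain ⟨w, hw, hw'⟩ := hP.p12 a z
    have : w = m12 a z := by
      rw [← sub_eq_zero]; apply D.inj3; rw [map_sub, hw, h1, sub_self]
    rw [← this]; simpa using hw'

theorem golod_of {ι1 ι2 ι3 : Type} [Fintype ι1] [Fintype ι2] [Fintype ι3]
    (b1 : Module.Basis ι1 R M1) (b2 : Module.Basis ι2 R M2) (b3 : Module.Basis ι3 R M3)
    (D : DGR R J M1 M2 M3)
    (hD : D.Min) (hP : D.Prod 0 0 0) : IsGolodQuotient R J := by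
  let L1 := (b1.reindex (Fintype.equivFin ι1)).equivFun
  let L2 := (b2.reindex (Fintype.equivFin ι2)).equivFun
  let L3 := (b3.reindex (Fintype.equivFin ι3)).equivFun
  apply golod_fin (D.congr L1 L2 L3) (hD.congr L1 L2 L3)
  simpa using hP.congr L1 L2 L3

theorem classH_fin {n1 n2 n3 p q : ℕ} (hp : p < n1) (hpq : p + q ≤ n2) (hq : q ≤ n3)
    (D : DGR R J (Fin n1 → R) (Fin n2 → R) (Fin n3 → R))
    (hD : D.Min) (s : (Fin n1 → R) →ₗ[R] R) (U : (Fin n1 → R) →ₗ[R] (Fin n2 → R))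
    (V : (Fin n2 → R) →ₗ[R] (Fin n3 → R)) (hP : D.Prod s U V)
    (hs : ∀ a : Fin n1, s (Pi.single a 1) = if (a : ℕ) = p then 1 else 0)
    (hU : ∀ a : Fin n1, ∀ h : (a : ℕ) < p,
      U (Pi.single a 1) = Pi.single (⟨a, by omega⟩ : Fin n2) 1)
    (hU' : ∀ a : Fin n1, ¬ (a : ℕ) < p → U (Pi.single a 1) = 0)
    (hV : ∀ b : Fin n2, ∀ h : p ≤ (b : ℕ) ∧ (b : ℕ) < p + q,
      V (Pi.single b 1) = Pi.single (⟨b - p, by omega⟩ : Fin n3) 1)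
    (hV' : ∀ b : Fin n2, ¬ (p ≤ (b : ℕ) ∧ (b : ℕ) < p + q) → V (Pi.single b 1) = 0) :
    HasTorClassH R J p q := by
  obtain ⟨m12, h1, h2⟩ := D.exists_m12
  have h12 : ∀ a z, m12 a z - s a • V z ∈ maximalIdeal R • (⊤ : Submodule R (Fin n3 → R)) := by
    intro a z
    obtain ⟨w, hw, hw'⟩ := hP.p12 a z
    have : w = m12 a z := by
      rw [← sub_eq_zero]; apply D.inj3; rw [map_sub, hw, h1, sub_self]
    rw [← this]; exact hw'
  refine ⟨n1, n2, n3, hp, hpq, hq, D.d1, D.d2, D.d3, D.m11, m12, D.range1, ?_, ?_, ?_, hD.min1,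
    hD.min2, hD.min3, D.leib, D.alt, D.anti, h1, h2, ?_, ?_, ?_, ?_⟩
  · ext v; exact ⟨fun h => D.ex1 v h, by rintro ⟨w, rfl⟩; exact D.dd1 w⟩
  · ext v; exact ⟨fun h => D.ex2 v h, by rintro ⟨w, rfl⟩; exact D.dd2 w⟩
  · rw [LinearMap.ker_eq_bot']; exact D.inj3
  · intro b hb
    have := hP.p11 (Pi.single (⟨p, hp⟩ : Fin n1) 1) (Pi.single b 1)
    rw [hs, hs, hU b hb, if_pos rfl, if_neg (by omega)] at this
    simpa using this
  · intro a b hab hba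
    have := hP.p11 (Pi.single a 1) (Pi.single b 1)
    have e : s (Pi.single a 1) • U (Pi.single b 1) - s (Pi.single b 1) • U (Pi.single a 1) = 0 := by
      rw [hs, hs]
      by_cases ha : (a : ℕ) = p
      · have hb : ¬ (b : ℕ) < p := fun h => hab ⟨ha, h⟩
        rw [hU' b hb, hU' a (by omega)]; simp
      · by_cases hb : (b : ℕ) = p
        · have ha : ¬ (a : ℕ) < p := fun h => hba ⟨hb, h⟩
          rw [hU' b (by omega), hU' a (by omega)]; simp
        · simp [ha, hb]
    rw [e, sub_zero] at this
    exact this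
  · intro b hb1 hb2
    have := h12 (Pi.single (⟨p, hp⟩ : Fin n1) 1) (Pi.single b 1)
    rw [hs, hV b ⟨hb1, hb2⟩, if_pos rfl, one_smul] at this
    exact this
  · intro a b hab
    have := h12 (Pi.single a 1) (Pi.single b 1)
    have e : s (Pi.single a 1) • V (Pi.single b 1) = 0 := by
      rw [hs]
      by_cases ha : (a : ℕ) = p
      · rw [hV' b (fun h => hab ⟨ha, h⟩), smul_zero]
      · simp [ha]
    rw [e, sub_zero] at this
    exact this

theorem classH_of {ι1 ι2 ι3 κ γ : Type} [Fintype ι1] [Fintype ι2] [Fintype ι3] [Fintype κ]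
    [Fintype γ]
    (b1 : Module.Basis ι1 R M1) (b2 : Module.Basis ι2 R M2) (b3 : Module.Basis ι3 R M3)
    (D : DGR R J M1 M2 M3) (hD : D.Min) (s : M1 →ₗ[R] R) (U : M1 →ₗ[R] M2) (V : M2 →ₗ[R] M3)
    (hP : D.Prod s U V)
    (k1 : κ → ι1) (f : ι1) (k2 : κ → ι2) (g2 : γ → ι2) (g3 : γ → ι3)
    (ik1 : Function.Injective k1) (if1 : ∀ i, k1 i ≠ f) (ik2 : Function.Injective k2)
    (ig2 : Function.Injective g2) (ikg : ∀ i c, k2 i ≠ g2 c) (ig3 : Function.Injective g3)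
    (hsf : s (b1 f) = 1) (hs : ∀ i, i ≠ f → s (b1 i) = 0)
    (hU : ∀ i, U (b1 (k1 i)) = b2 (k2 i)) (hU' : ∀ i, (∀ j, k1 j ≠ i) → U (b1 i) = 0)
    (hV : ∀ c, V (b2 (g2 c)) = b3 (g3 c)) (hV' : ∀ i, (∀ c, g2 c ≠ i) → V (b2 i) = 0) :
    HasTorClassH R J (Fintype.card κ) (Fintype.card γ) := by
  obtain ⟨n1, hn1, e1, ek1, ef⟩ := exists_enum k1 (fun _ : Unit => f) ik1
    (fun _ _ _ => rfl) (fun i _ => if1 i)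
  obtain ⟨n2, hn2, e2, ek2, eg2⟩ := exists_enum k2 g2 ik2 ig2 ikg
  obtain ⟨n3, hn3, e3, eg3, -⟩ := exists_enum g3 (fun z : Empty => z.elim) ig3
    (fun z => z.elim) (fun _ z => z.elim)
  simp only [Fintype.card_unit, Fintype.card_empty, Nat.add_zero] at hn1 hn3
  have ef' : (e1 f : ℕ) = Fintype.card κ := by
    rw [ef ()]
    have := (Fintype.equivFin Unit ()).2
    simp only [Fintype.card_unit] at this
    omega
  let L1 := (b1.reindex e1).equivFun
  let L2 := (b2.reindex e2).equivFun
  let L3 := (b3.reindex e3).equivFun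
  have l1 : ∀ a, L1.symm (Pi.single a 1) = b1 (e1.symm a) := by
    intro a
    simp only [L1, Module.Basis.equivFun_symm_apply]
    rw [Finset.sum_eq_single a] <;> simp +contextual
  have l2 : ∀ a, L2.symm (Pi.single a 1) = b2 (e2.symm a) := by
    intro a
    simp only [L2, Module.Basis.equivFun_symm_apply]
    rw [Finset.sum_eq_single a] <;> simp +contextual
  have l2' : ∀ i, L2 (b2 i) = Pi.single (e2 i) 1 := by
    intro i; rw [← LinearEquiv.eq_symm_apply, l2]; simp
  have l3 : ∀ a, L3.symm (Pi.single a 1) = b3 (e3.symm a) := by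
    intro a
    simp only [L3, Module.Basis.equivFun_symm_apply]
    rw [Finset.sum_eq_single a] <;> simp +contextual
  have l3' : ∀ i, L3 (b3 i) = Pi.single (e3 i) 1 := by
    intro i; rw [← LinearEquiv.eq_symm_apply, l3]; simp
  have find1 : ∀ a : Fin n1, (a : ℕ) < Fintype.card κ → ∃ i, e1.symm a = k1 i ∧ (e1 (k1 i) : ℕ) = a := by
    intro a h
    refine ⟨(Fintype.equivFin κ).symm ⟨a, h⟩, ?_, ?_⟩
    · rw [Equiv.symm_apply_eq]; ext; rw [ek1]; simp
    · rw [ek1]; simp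
  have find2 : ∀ b : Fin n2, (Fintype.card κ ≤ (b : ℕ) ∧ (b : ℕ) < Fintype.card κ + Fintype.card γ)
      → ∃ c, e2.symm b = g2 c ∧ (e2 (g2 c) : ℕ) = b := by
    intro b h
    have : (e2 (g2 ((Fintype.equivFin γ).symm ⟨b - Fintype.card κ, by omega⟩)) : ℕ) = b := by
      rw [eg2]; simp; omega
    refine ⟨(Fintype.equivFin γ).symm ⟨b - Fintype.card κ, by omega⟩, ?_, this⟩
    · rw [Equiv.symm_apply_eq]; ext; exact this.symm
  refine classH_fin (by omega) hn2 hn3 (D.congr L1 L2 L3) (hD.congr L1 L2 L3) _ _ _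
    (hP.congr L1 L2 L3) ?_ ?_ ?_ ?_ ?_
  · intro a
    simp only [LinearMap.comp_apply, LinearEquiv.coe_coe, l1]
    split_ifs with h
    · have : e1.symm a = f := by rw [Equiv.symm_apply_eq]; ext; omega
      rw [this, hsf]
    · apply hs
      rintro rfl
      simp at ef'
      exact h ef'
  · intro a h
    obtain ⟨i, hi, hi'⟩ := find1 a h
    simp only [LinearMap.comp_apply, LinearEquiv.coe_coe, l1, hi, hU, l2']
    congr 1
    ext
    rw [ek1] at hi'
    simp only [ek2, hi']
  · intro a h
    simp only [LinearMap.comp_apply, LinearEquiv.coe_coe, l1]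
    rw [hU', map_zero]
    intro j hj
    apply h
    have := ek1 j
    rw [hj] at this
    simp only [Equiv.apply_symm_apply] at this
    rw [this]; exact (Fintype.equivFin κ j).2
  · intro b h
    obtain ⟨c, hc, hc'⟩ := find2 b h
    simp only [LinearMap.comp_apply, LinearEquiv.coe_coe, l2, hc, hV, l3']
    congr 1
    ext
    rw [eg2] at hc'
    simp only [eg3]
    omega
  · intro b h
    simp only [LinearMap.comp_apply, LinearEquiv.coe_coe, l2]
    rw [hV', map_zero]
    intro c hc
    apply h
    have := eg2 c
    rw [hc] at this
    simp only [Equiv.apply_symm_apply] at this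
    have := (Fintype.equivFin γ c).2
    omega

end Final
end TrimHB

open IsLocalRing

namespace TrimHB
section HBres
variable {R : Type} [CommRing R] {P : ℕ}

theorem exists_W (y : Fin 3 → R) (h0 : ∀ a, y 0 * a = 0 → a = 0) :
    ∃ W : (Fin (P + 1) → R) →ₗ[R] (Fin (P + 1) → R) →ₗ[R] (Fin P → R),
      (∀ u v, (Xmat y P).mulVec (W u v) = dlt y u • v - dlt y v • u) ∧
      (∀ I : Ideal R, (∀ l, y l ∈ I) → ∀ u v c, W u v c ∈ I ^ (P - 1)) := by
  obtain ⟨W, hW⟩ := exists_lift₂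
    ((LinearMap.lsmul R (Fin (P + 1) → R)).comp (dlt y)
      - ((LinearMap.lsmul R (Fin (P + 1) → R)).comp (dlt y)).flip)
    (Xmat y P).mulVecLin (fun w hw => X_inj y h0 w hw) (fun u v => ⟨_, by
      rw [Matrix.mulVecLin_apply, exists_W0 y u v]; simp⟩)
  have hW' : ∀ u v, (Xmat y P).mulVec (W u v) = dlt y u • v - dlt y v • u := by
    intro u v
    have := hW u v
    simpa using this
  refine ⟨W, hW', fun I hI u v c => ?_⟩
  have : W u v = Fin.tail ((Mu y u).cramer v) := by
    rw [← sub_eq_zero]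
    apply X_inj y h0
    rw [Matrix.mulVec_sub, hW', exists_W0, sub_self]
  rw [this]
  exact W0_mem y I hI u v c

/-- hypotheses making the Hilbert--Burch construction work -/
structure HBH (y : Fin 3 → R) (z : R) (P : ℕ)
    (W : (Fin (P + 1) → R) →ₗ[R] (Fin (P + 1) → R) →ₗ[R] (Fin P → R)) : Prop where
  h0 : ∀ a, y 0 * a = 0 → a = 0
  h1 : ∀ a b, y 1 * a = y 0 * b → ∃ c, a = y 0 * c
  hz : ∀ (r : R) (v : Fin (P + 1) → R), z * r = dlt y v → ∃ u : Fin (P + 1) → R, r = dlt y u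
  hW : ∀ u v, (Xmat y P).mulVec (W u v) = dlt y u • v - dlt y v • u

namespace HBH
variable {y : Fin 3 → R} {z : R} {W : (Fin (P + 1) → R) →ₗ[R] (Fin (P + 1) → R) →ₗ[R] (Fin P → R)}

theorem inj (H : HBH y z P W) {w w' : Fin P → R}
    (h : (Xmat y P).mulVec w = (Xmat y P).mulVec w') : w = w' := by
  rw [← sub_eq_zero]
  apply X_inj y H.h0
  rw [Matrix.mulVec_sub, h, sub_self]

theorem WX (H : HBH y z P W) (u : Fin (P + 1) → R) (v : Fin P → R) :
    W u ((Xmat y P).mulVec v) = dlt y u • v := by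
  apply H.inj
  rw [H.hW, dlt_X, zero_smul, sub_zero, Matrix.mulVec_smul]

theorem Walt (H : HBH y z P W) (u : Fin (P + 1) → R) : W u u = 0 := by
  apply H.inj
  rw [H.hW, sub_self, Matrix.mulVec_zero]

/-- first differential -/
def D1 (y : Fin 3 → R) (z : R) (P : ℕ) : ((Fin (P + 1) → R) × R) →ₗ[R] R :=
  LinearMap.coprod (dlt y) (z • LinearMap.id)

theorem D1_apply (a : (Fin (P + 1) → R) × R) : D1 y z P a = dlt y a.1 + z * a.2 := by
  simp [D1]

/-- the resolution -/
noncomputable def res (H : HBH y z P W) : DGR R (LinearMap.range (D1 y z P)) ((Fin (P + 1) → R) × R)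
    ((Fin (P + 1) → R) × (Fin P → R)) (Fin P → R) where
  d1 := D1 y z P
  d2 := LinearMap.prod
    (LinearMap.coprod (z • LinearMap.id) (Xmat y P).mulVecLin)
    (LinearMap.coprod (-(dlt y)) 0)
  d3 := LinearMap.prod (-(Xmat y P).mulVecLin) (z • LinearMap.id)
  m11 := LinearMap.mk₂ R (fun a b => (a.2 • b.1 - b.2 • a.1, W a.1 b.1))
    (by
      intro a a' b
      refine Prod.ext ?_ ?_
      · simp only [Prod.fst_add, Prod.snd_add]; module
      · simp)
    (by
      intro r a b
      refine Prod.ext ?_ ?_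
      · simp only [Prod.smul_fst, Prod.smul_snd, smul_eq_mul]; module
      · simp)
    (by
      intro a b b'
      refine Prod.ext ?_ ?_
      · simp only [Prod.fst_add, Prod.snd_add]; module
      · simp)
    (by
      intro r a b
      refine Prod.ext ?_ ?_
      · simp only [Prod.smul_fst, Prod.smul_snd, smul_eq_mul]; module
      · simp)
  range1 := rfl
  dd1 v := by
    rw [D1_apply]
    simp [dlt_X]
  ex1 v hv := by
    rw [D1_apply] at hv
    obtain ⟨u', hu'⟩ := H.hz v.2 (-v.1) (by rw [map_neg]; linear_combination hv)
    obtain ⟨w, hw⟩ := hb_exact y H.h0 H.h1 (v.1 + z • u') (by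
      rw [map_add, map_smul, ← hu', smul_eq_mul]; exact hv)
    refine ⟨(-u', w), Prod.ext ?_ ?_⟩
    · simp [hw]
    · simp [hu']
  dd2 v := by
    refine Prod.ext ?_ ?_
    · simp [Matrix.mulVec_smul]
    · simp [dlt_X]
  ex2 v hv := by
    have a := congrArg Prod.fst hv
    have b := congrArg Prod.snd hv
    simp at a b
    obtain ⟨w, hw⟩ := hb_exact y H.h0 H.h1 v.1 b
    refine ⟨-w, Prod.ext ?_ ?_⟩
    · simp [hw, Matrix.mulVec_neg]
    · apply H.inj
      simp only [LinearMap.prod_apply, Function.prod_apply, LinearMap.smul_apply, LinearMap.id_apply]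
      rw [Matrix.mulVec_smul, Matrix.mulVec_neg, hw]
      rw [← sub_eq_zero, ← neg_eq_zero, ← a]
      module
  inj3 v hv := by
    have a := congrArg Prod.fst hv
    simp at a
    exact X_inj y H.h0 v a
  leib a b := by
    refine Prod.ext ?_ ?_
    · simp only [D1_apply, LinearMap.mk₂_apply, LinearMap.prod_apply, Function.prod_apply, LinearMap.coprod_apply,
        Matrix.mulVecLin_apply, H.hW, LinearMap.smul_apply, LinearMap.id_apply, Prod.fst_sub,
        Prod.smul_fst]
      module
    · simp only [D1_apply, LinearMap.mk₂_apply, LinearMap.prod_apply, Function.prod_apply, LinearMap.coprod_apply,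
        LinearMap.zero_apply, LinearMap.neg_apply, map_sub, map_smul, Prod.snd_sub, Prod.smul_snd,
        smul_eq_mul]
      ring
  alt a := by
    refine Prod.ext ?_ ?_
    · simp
    · simp [H.Walt]

theorem res_d1 (H : HBH y z P W) (a) : H.res.d1 a = dlt y a.1 + z * a.2 := D1_apply a
theorem res_d2 (H : HBH y z P W) (v) :
    H.res.d2 v = (z • v.1 + (Xmat y P).mulVec v.2, - dlt y v.1) := by
  simp [res]
theorem res_d3 (H : HBH y z P W) (w) : H.res.d3 w = (-(Xmat y P).mulVec w, z • w) := by
  simp [res]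
theorem res_m11 (H : HBH y z P W) (a b) :
    H.res.m11 a b = (a.2 • b.1 - b.2 • a.1, W a.1 b.1) := by
  simp [res]
theorem res_mu (H : HBH y z P W) (a v) :
    H.res.d3 (a.2 • v.2 - W a.1 v.1) = H.res.d1 a • v - H.res.m11 a (H.res.d2 v) := by
  rw [res_d3, res_d1, res_m11, res_d2]
  refine Prod.ext ?_ ?_
  · simp only [Matrix.mulVec_sub, Matrix.mulVec_smul, H.hW, Prod.fst_sub, Prod.smul_fst]
    module
  · simp only [map_add, map_smul, H.WX, Prod.snd_sub, Prod.smul_snd]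
    module

end HBH
end HBres
end TrimHB

open IsLocalRing

namespace TrimHB
section Trim
variable {R : Type} [CommRing R]

/-- `exists_alt_lift` for a free module with a chosen basis -/
theorem exists_alt_lift' {ι M : Type} [Fintype ι] [AddCommGroup M] [Module R M]
    (b : Module.Basis ι R M) {N P : Type} [AddCommGroup N]
    [AddCommGroup P] [Module R N] [Module R P]
    (B : M →ₗ[R] M →ₗ[R] P) (hB : ∀ a, B a a = 0) (g : N →ₗ[R] P)
    (h : ∀ a a', ∃ w, g w = B a a') :
    ∃ m : M →ₗ[R] M →ₗ[R] N, (∀ a b, g (m a b) = B a b) ∧ ∀ a, m a a = 0 := by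
  let L := (b.reindex (Fintype.equivFin ι)).equivFun
  obtain ⟨m, h1, h2⟩ := exists_alt_lift
    (B.compl₁₂ L.symm.toLinearMap L.symm.toLinearMap) (fun a => hB _) g (fun i j => h _ _)
  refine ⟨m.compl₁₂ L.toLinearMap L.toLinearMap, fun a b => ?_, fun a => h2 _⟩
  simp [h1]

variable (x : Fin 3 → R) (B : Type)

/-- `K₁ → R`, for a family indexed by `B` -/
def kε : (B × Fin 3 → R) →ₗ[R] (B → R) where
  toFun k b := k (b, 0) * x 0 + k (b, 1) * x 1 + k (b, 2) * x 2
  map_add' k k' := by funext b; simp only [Pi.add_apply]; ring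
  map_smul' r k := by funext b; simp only [Pi.smul_apply, smul_eq_mul, RingHom.id_apply]; ring

/-- `K₂ → K₁` -/
def k2 : (B × Fin 3 → R) →ₗ[R] (B × Fin 3 → R) where
  toFun h b := ![x 1 * h (b.1, 2) - x 2 * h (b.1, 1), x 2 * h (b.1, 0) - x 0 * h (b.1, 2),
    x 0 * h (b.1, 1) - x 1 * h (b.1, 0)] b.2
  map_add' k k' := by
    funext ⟨b, l⟩
    fin_cases l <;> simp <;> ring
  map_smul' r k := by
    funext ⟨b, l⟩
    fin_cases l <;> simp <;> ring

/-- `K₃ → K₂` -/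
def k3 : (B → R) →ₗ[R] (B × Fin 3 → R) where
  toFun r b := r b.1 * x b.2
  map_add' k k' := by funext b; simp only [Pi.add_apply]; ring
  map_smul' r k := by funext b; simp only [Pi.smul_apply, smul_eq_mul, RingHom.id_apply]; ring

variable {x B}

theorem kε_k2 (h) : kε x B (k2 x B h) = 0 := by
  funext b
  simp [kε, k2]; ring

theorem k2_k3 (h) : k2 x B (k3 x B h) = 0 := by
  funext ⟨b, l⟩
  fin_cases l <;> simp [k2, k3] <;> ring

theorem kε_ex (hx : KReg x) (k) (h : kε x B k = 0) : ∃ w, k2 x B w = k := by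
  have : ∀ b, ∃ h : Fin 3 → R, k (b, 0) = x 1 * h 2 - x 2 * h 1 ∧ k (b, 1) = x 2 * h 0 - x 0 * h 2 ∧
      k (b, 2) = x 0 * h 1 - x 1 * h 0 := fun b => kz1 hx (fun l => k (b, l)) (congrFun h b)
  choose w h0 h1 h2 using this
  refine ⟨fun b => w b.1 b.2, ?_⟩
  funext ⟨b, l⟩
  fin_cases l <;> simp [k2, h0, h1, h2]

theorem kε_ex_sq [IsLocalRing R] (hx : KReg x)
    (hm : Ideal.span {x 0, x 1, x 2} = maximalIdeal R) (k) (h : kε x B k = 0)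
    (hk : ∀ i, k i ∈ maximalIdeal R ^ 2) : ∃ w, (∀ i, w i ∈ maximalIdeal R) ∧ k2 x B w = k := by
  have : ∀ b, ∃ h : Fin 3 → R, (∀ l, h l ∈ maximalIdeal R) ∧
      k (b, 0) = x 1 * h 2 - x 2 * h 1 ∧ k (b, 1) = x 2 * h 0 - x 0 * h 2 ∧
      k (b, 2) = x 0 * h 1 - x 1 * h 0 :=
    fun b => kz1_sq hx hm (fun l => k (b, l)) (congrFun h b) (fun l => hk (b, l))
  choose w hw h0 h1 h2 using this
  refine ⟨fun b => w b.1 b.2, fun i => hw _ _, ?_⟩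
  funext ⟨b, l⟩
  fin_cases l <;> simp [k2, h0, h1, h2]

theorem k2_ex (hx : KReg x) (k) (h : k2 x B k = 0) : ∃ w, k3 x B w = k := by
  have : ∀ b, ∃ r, ∀ l, k (b, l) = r * x l := fun b => kz2 hx (fun l => k (b, l))
    (by simpa [k2] using congrFun h (b, 0)) (by simpa [k2] using congrFun h (b, 1))
    (by simpa [k2] using congrFun h (b, 2))
  choose w h0 using this
  exact ⟨w, by funext b; exact (h0 b.1 b.2).symm⟩

theorem k3_inj (hx : KReg x) (r) (h : k3 x B r = 0) : r = 0 := by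
  funext b
  apply hx.r0
  have := congrFun h (b, 0)
  simp only [k3, LinearMap.coe_mk, AddHom.coe_mk, Pi.zero_apply] at this
  rw [mul_comm]; exact this

variable (x)
/-- comparison map in degree one -/
def thetaMap (A B : Type) : ((A → R) × (B × Fin 3 → R)) →ₗ[R] ((A → R) × (B → R)) :=
  LinearMap.prodMap LinearMap.id (kε x B)

theorem thetaMap_apply {A B : Type} (a : (A → R) × (B × Fin 3 → R)) :
    thetaMap x A B a = (a.1, kε x B a.2) := rfl

variable {x}
variable [IsLocalRing R] {A : Type} {J0 : Ideal R} {F2 F3 : Type} [AddCommGroup F2]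
  [AddCommGroup F3] [Module R F2] [Module R F3]

/-- data for the trimming complex -/
structure TD (D : DGR R J0 ((A → R) × (B → R)) F2 F3) (x : Fin 3 → R)
    (q : F2 →ₗ[R] (B × Fin 3 → R)) (Q : F3 →ₗ[R] (B × Fin 3 → R))
    (mu : ((A → R) × (B → R)) → F2 → F3) : Prop where
  hx : KReg x
  hm : Ideal.span {x 0, x 1, x 2} = maximalIdeal R
  d1sq : ∀ a, D.d1 a ∈ maximalIdeal R ^ 2
  d3m : ∀ a, D.d3 a ∈ maximalIdeal R • (⊤ : Submodule R F2)
  hq : ∀ v, kε x B (q v) = (D.d2 v).2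
  qsq : ∀ a b i, q (D.m11 a b) i ∈ maximalIdeal R ^ 2
  hQ : ∀ g, k2 x B (Q g) = q (D.d3 g)
  Qm : ∀ g i, Q g i ∈ maximalIdeal R
  hmu : ∀ a z, D.d3 (mu a z) = D.d1 a • z - D.m11 a (D.d2 z)
  Qmu : ∀ a z i, Q (mu (thetaMap x A B a) z) i ∈ maximalIdeal R ^ 2

theorem exists_T [Fintype A] [Fintype B] {D : DGR R J0 ((A → R) × (B → R)) F2 F3}
    {q : F2 →ₗ[R] (B × Fin 3 → R)} {Q : F3 →ₗ[R] (B × Fin 3 → R)}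
    {mu : ((A → R) × (B → R)) → F2 → F3} (H : TD D x q Q mu) {J : Ideal R}
    (hJ : LinearMap.range (D.d1 ∘ₗ thetaMap x A B) = J) :
    ∃ T : DGR R J ((A → R) × (B × Fin 3 → R)) (F2 × (B × Fin 3 → R)) (F3 × (B → R)),
      (∀ a, T.d1 a = D.d1 (thetaMap x A B a)) ∧
      (∀ v, T.d2 v = ((D.d2 v.1).1, q v.1 + k2 x B v.2)) ∧
      (∀ w, T.d3 w = (D.d3 w.1, - Q w.1 + k3 x B w.2)) ∧
      (∀ a b, (T.m11 a b).1 = D.m11 (thetaMap x A B a) (thetaMap x A B b)) ∧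
      (∀ a b i, (T.m11 a b).2 i ∈ maximalIdeal R) ∧
      (∀ a z, T.d2 z ∈ maximalIdeal R • (⊤ : Submodule R ((A → R) × (B × Fin 3 → R))) →
        ∃ w, T.d3 w = T.d1 a • z - T.m11 a (T.d2 z) ∧ w.1 = mu (thetaMap x A B a) z.1 ∧
          ∀ b, w.2 b ∈ maximalIdeal R) := by
  classical
  let θ := thetaMap x A B
  let N : Submodule R (B × Fin 3 → R) := Submodule.pi Set.univ (fun _ => maximalIdeal R)
  let S := LinearMap.snd R (A → R) (B × Fin 3 → R)
  let Bil0 : ((A → R) × (B × Fin 3 → R)) →ₗ[R] ((A → R) × (B × Fin 3 → R)) →ₗ[R] (B × Fin 3 → R) :=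
    (LinearMap.lsmul R (B × Fin 3 → R)).compl₁₂ (D.d1 ∘ₗ θ) S
  let Bil := Bil0 - Bil0.flip - (D.m11.compl₁₂ θ θ).compr₂ q
  have hBil : ∀ a b, Bil a b = D.d1 (θ a) • b.2 - D.d1 (θ b) • a.2 - q (D.m11 (θ a) (θ b)) :=
    fun a b => rfl
  obtain ⟨κ, hκ, κalt⟩ := exists_alt_lift'
    ((Pi.basisFun R A).prod (Pi.basisFun R (B × Fin 3))) Bil
    (by intro a; rw [hBil, D.alt]; simp) (k2 x B ∘ₗ N.subtype) (by
      intro a b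
      obtain ⟨w, hw, e⟩ := kε_ex_sq H.hx H.hm (Bil a b) (by
        rw [hBil, map_sub, map_sub, H.hq, D.leib, map_smul, map_smul]
        simp [θ, thetaMap_apply]) (by
        intro i
        rw [hBil]
        refine sub_mem (sub_mem ?_ ?_) (H.qsq _ _ _)
        · exact Ideal.mul_mem_right _ _ (H.d1sq _)
        · exact Ideal.mul_mem_right _ _ (H.d1sq _))
      exact ⟨⟨w, fun i _ => hw i⟩, e⟩)
  have hκ' : ∀ a b, k2 x B (κ a b : B × Fin 3 → R) = Bil a b := hκ
  have hθ : ∀ v k, θ ((D.d2 v).1, q v + k2 x B k) = D.d2 v := by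
    intro v k
    refine Prod.ext rfl ?_
    simp [θ, thetaMap_apply, kε_k2, H.hq]
  let T : DGR R J ((A → R) × (B × Fin 3 → R)) (F2 × (B × Fin 3 → R)) (F3 × (B → R)) :=
    { d1 := D.d1 ∘ₗ θ
      d2 := LinearMap.prod (LinearMap.fst R _ _ ∘ₗ D.d2 ∘ₗ LinearMap.fst R _ _)
        (LinearMap.coprod q (k2 x B))
      d3 := LinearMap.prod (D.d3 ∘ₗ LinearMap.fst R _ _) (LinearMap.coprod (-Q) (k3 x B))
      m11 := LinearMap.mk₂ R (fun a b => (D.m11 (θ a) (θ b), (κ a b : B × Fin 3 → R)))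
        (by intros; refine Prod.ext ?_ ?_ <;> simp)
        (by intros; refine Prod.ext ?_ ?_ <;> simp)
        (by intros; refine Prod.ext ?_ ?_ <;> simp)
        (by intros; refine Prod.ext ?_ ?_ <;> simp)
      range1 := hJ
      dd1 := fun v => by
        have := hθ v.1 v.2
        simp only [LinearMap.comp_apply, LinearMap.prod_apply, Function.prod_apply,
          LinearMap.coprod_apply, LinearMap.fst_apply]
        rw [this, D.dd1]
      ex1 := fun v hv => by
        obtain ⟨w, hw⟩ := D.ex1 (θ v) hv
        obtain ⟨k, hk⟩ := kε_ex H.hx (v.2 - q w) (by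
          rw [map_sub, H.hq, hw]; simp [θ, thetaMap_apply])
        refine ⟨(w, k), Prod.ext ?_ ?_⟩
        · simp [hw]; rfl
        · simp [hk]
      dd2 := fun v => by
        refine Prod.ext ?_ ?_
        · simp [D.dd2]
        · simp [H.hQ, k2_k3]
      ex2 := fun v hv => by
        have a := congrArg Prod.fst hv
        have b := congrArg Prod.snd hv
        simp at a b
        obtain ⟨g, hg⟩ := D.ex2 v.1 (by
          refine Prod.ext a ?_
          rw [← H.hq, eq_neg_of_add_eq_zero_left b, map_neg, kε_k2]; simp)
        obtain ⟨r, hr⟩ := k2_ex H.hx (v.2 + Q g) (by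
          rw [map_add, H.hQ, hg, add_comm]; exact b)
        refine ⟨(g, r), Prod.ext ?_ ?_⟩
        · simp [hg]
        · simp [hr]
      inj3 := fun v hv => by
        have a := congrArg Prod.fst hv
        have b := congrArg Prod.snd hv
        simp at a b
        have a' := D.inj3 _ a
        rw [a', map_zero, neg_zero, zero_add] at b
        exact Prod.ext a' (k3_inj H.hx _ b)
      leib := fun a b => by
        refine Prod.ext ?_ ?_
        · simp [D.leib]; rfl
        · simp [hκ', hBil]
      alt := fun a => by simp [D.alt, κalt] }
  have t1 : ∀ a, T.d1 a = D.d1 (θ a) := fun a => rfl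
  have t2 : ∀ v, T.d2 v = ((D.d2 v.1).1, q v.1 + k2 x B v.2) := fun v => by simp [T]
  have t3 : ∀ w, T.d3 w = (D.d3 w.1, - Q w.1 + k3 x B w.2) := fun v => by simp [T]
  have t4 : ∀ a b, (T.m11 a b).1 = D.m11 (θ a) (θ b) := fun a b => by simp [T]
  have t5 : ∀ a b i, (T.m11 a b).2 i ∈ maximalIdeal R := fun a b i => by
    have : (T.m11 a b).2 = (κ a b : B × Fin 3 → R) := by simp [T]
    rw [this]
    exact (κ a b).2 i trivial
  clear_value T
  refine ⟨T, t1, t2, t3, t4, t5, fun a z hz => ?_⟩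
  obtain ⟨w, hw⟩ := T.ex2 (T.d1 a • z - T.m11 a (T.d2 z)) (by
    rw [map_sub, T.leib, T.dd1, map_smul]; simp)
  have w1 : w.1 = mu (θ a) z.1 := by
    rw [← sub_eq_zero]
    apply D.inj3
    have := congrArg Prod.fst hw
    rw [t3, t1] at this
    simp only [Prod.fst_sub, Prod.smul_fst, t4] at this
    rw [t2 z, hθ] at this
    rw [map_sub, this, H.hmu, sub_self]
  refine ⟨w, hw, w1, fun b => ?_⟩
  apply r_mem_of H.hx H.hm
  have h2 := congrFun (congrArg Prod.snd hw) (b, 0)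
  rw [t3, w1] at h2
  have e : w.2 b * x 0 = T.d1 a * z.2 (b, 0) - (T.m11 a (T.d2 z)).2 (b, 0)
      + Q (mu (θ a) z.1) (b, 0) := by
    have : k3 x B w.2 (b, 0) = w.2 b * x 0 := rfl
    rw [← this]
    simp only [Pi.add_apply, Pi.neg_apply, Prod.snd_sub, Pi.sub_apply, Prod.smul_snd, Pi.smul_apply,
      smul_eq_mul] at h2
    linear_combination h2
  rw [e]
  refine add_mem (sub_mem ?_ ?_) (H.Qmu _ _ _)
  · rw [t1]; exact Ideal.mul_mem_right _ _ (H.d1sq _)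
  · refine Submodule.smul_induction_on hz ?_ ?_
    · intro r hr n _
      rw [map_smul, Prod.smul_snd, Pi.smul_apply, smul_eq_mul, sq]
      exact Ideal.mul_mem_mul hr (t5 _ _ _)
    · intro u v hu hv
      rw [map_add]
      exact add_mem hu hv

end Trim
end TrimHB

open IsLocalRing

namespace TrimHB
section Red
variable {R : Type} [CommRing R] [IsLocalRing R] {J : Ideal R} {M1 M2 M3 N1 N2 : Type}
  [AddCommGroup M1] [AddCommGroup M2] [AddCommGroup M3] [Module R M1] [Module R M2] [Module R M3]
  [AddCommGroup N1] [AddCommGroup N2] [Module R N1] [Module R N2]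

theorem exists_reduce (T : DGR R J M1 M2 M3)
    (ι1 : N1 →ₗ[R] M1) (r1 : M1 →ₗ[R] N1) (j : N2 →ₗ[R] M2) (r2 : M2 →ₗ[R] N2) (e : M1 →ₗ[R] M2)
    (a1 : ∀ v, r1 (ι1 v) = v) (a2 : ∀ v, r2 (j v) = v) (a3 : ∀ v, e (ι1 v) = 0)
    (a4 : ∀ v, r2 (e v) = 0) (a5 : ∀ v, e (T.d2 (e v)) = e v)
    (a6 : ∀ v, e v = 0 → ι1 (r1 v) = v) (a7 : ∀ v, r2 v = 0 → ∃ w, v = e w)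
    (b1 : ∀ v, T.d1 v ∈ maximalIdeal R)
    (b2 : ∀ v, T.d2 (j v) ∈ maximalIdeal R • (⊤ : Submodule R M1))
    (b3 : ∀ v, T.d3 v ∈ maximalIdeal R • (⊤ : Submodule R M2)) :
    ∃ D : DGR R J N1 N2 M3, D.Min ∧ (∀ a b, D.m11 a b = r2 (T.m11 (ι1 a) (ι1 b))) ∧
      ∀ z, ∃ z', z' - j z ∈ maximalIdeal R • (⊤ : Submodule R M2) ∧
        T.d2 z' ∈ maximalIdeal R • (⊤ : Submodule R M1) ∧
        ∀ a w, T.d3 w = T.d1 (ι1 a) • z' - T.m11 (ι1 a) (T.d2 z') →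
          D.d3 w = D.d1 a • z - D.m11 a (D.d2 z) := by
  let p1 : M1 →ₗ[R] N1 := r1 - r1 ∘ₗ T.d2 ∘ₗ e
  let i2 : N2 →ₗ[R] M2 := j - e ∘ₗ T.d2 ∘ₗ j
  have hp1 : ∀ v, p1 v = r1 (v - T.d2 (e v)) := fun v => by simp [p1]
  have hi2 : ∀ v, i2 v = j v - e (T.d2 (j v)) := fun v => by simp [i2]
  have h1 : ∀ v, p1 (ι1 v) = v := fun v => by rw [hp1, a3, map_zero, sub_zero, a1]
  have h3 : ∀ v, ι1 (p1 v) + T.d2 (e v) = v := fun v => by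
    rw [hp1, a6 _ (by rw [map_sub, a5, sub_self]), sub_add_cancel]
  have h2 : ∀ v, r2 (i2 v) = v := fun v => by rw [hi2, map_sub, a2, a4, sub_zero]
  have h4 : ∀ v, i2 (r2 v) + e (T.d2 v) = v := fun v => by
    obtain ⟨w, hw⟩ := a7 (v - j (r2 v)) (by rw [map_sub, a2, sub_self])
    have hv : v = j (r2 v) + e w := by rw [← hw]; abel
    have : e (T.d2 v) = e (T.d2 (j (r2 v))) + e w := by
      conv_lhs => rw [hv]
      rw [map_add, map_add, a5]
    rw [hi2, this]
    conv_rhs => rw [hv]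
    abel
  have c2 : ∀ v, e (T.d2 (i2 v)) = 0 := by
    intro v
    have := h4 (i2 v)
    rw [h2] at this
    exact add_eq_left.1 this
  have c1 : ∀ v, ι1 (p1 (T.d2 (i2 v))) = T.d2 (i2 v) := by
    intro v
    have := h3 (T.d2 (i2 v))
    rwa [c2, map_zero, add_zero] at this
  have m2 : ∀ v, T.d2 (i2 v) ∈ maximalIdeal R • (⊤ : Submodule R M1) := fun v => by
    rw [hi2, map_sub]
    exact sub_mem (b2 v) (map_mem_smul_top _ (T.d2 ∘ₗ e) (b2 v))
  refine ⟨T.reduce ι1 p1 i2 r2 e h1 h3 h4 h2, ⟨fun v => b1 _, fun v => ?_, fun v => ?_⟩,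
    fun a b => rfl, fun z => ⟨i2 z, ?_, m2 z, fun a w hw => ?_⟩⟩
  · exact map_mem_smul_top _ p1 (m2 v)
  · exact map_mem_smul_top _ r2 (b3 v)
  · rw [hi2, sub_sub_cancel_left]
    exact neg_mem (map_mem_smul_top _ e (b2 z))
  · change r2 (T.d3 w) = T.d1 (ι1 a) • z - r2 (T.m11 (ι1 a) (ι1 (p1 (T.d2 (i2 z)))))
    rw [hw, c1, map_sub, map_smul, h2]

end Red

section Conc
variable {R : Type} [CommRing R] {P : ℕ}

/-- extension by zero -/
noncomputable def exz {α : Type} (p : α → Prop) : ({a // p a} → R) →ₗ[R] (α → R) := by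
  classical
  exact
  { toFun := fun f a => if h : p a then f ⟨a, h⟩ else 0
    map_add' := fun f g => by funext a; by_cases h : p a <;> simp [h]
    map_smul' := fun r g => by funext a; by_cases h : p a <;> simp [h] }

theorem exz_pos {α : Type} {p : α → Prop} (f : {a // p a} → R) (a : α) (h : p a) :
    exz p f a = f ⟨a, h⟩ := by
  simp [exz, h]

theorem exz_neg {α : Type} {p : α → Prop} (f : {a // p a} → R) (a : α) (h : ¬ p a) :
    exz p f a = 0 := by
  simp [exz, h]

/-- gluing of functions on a finset and its complement -/
noncomputable def glue {n : ℕ} (σ : Finset (Fin n)) (f : {i // i ∉ σ} → R) (g : {i // i ∈ σ} → R)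
    (i : Fin n) : R := if h : i ∈ σ then g ⟨i, h⟩ else f ⟨i, h⟩

/-- splitting of the first module -/
noncomputable def EE (σ : Finset (Fin (P + 2))) :
    ((Fin (P + 1) → R) × R) ≃ₗ[R] (({i // i ∉ σ} → R) × ({i // i ∈ σ} → R)) where
  toFun a := (fun i => Fin.snoc (α := fun _ => R) a.1 a.2 i.1,
    fun i => Fin.snoc (α := fun _ => R) a.1 a.2 i.1)
  invFun c := (fun i => glue σ c.1 c.2 i.castSucc, glue σ c.1 c.2 (Fin.last _))
  map_add' a b := by
    refine Prod.ext ?_ ?_ <;>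
    · funext ⟨i, hi⟩
      induction i using Fin.lastCases <;> simp
  map_smul' r a := by
    refine Prod.ext ?_ ?_ <;>
    · funext ⟨i, hi⟩
      induction i using Fin.lastCases <;> simp
  left_inv a := by
    refine Prod.ext ?_ ?_
    · funext i
      by_cases h : i.castSucc ∈ σ <;> simp [glue, h]
    · by_cases h : Fin.last _ ∈ σ <;> simp [glue, h]
  right_inv c := by
    refine Prod.ext ?_ ?_ <;>
    · funext ⟨i, hi⟩
      induction i using Fin.lastCases <;> simp [glue, hi]

theorem EE_fst (σ : Finset (Fin (P + 2))) (a : (Fin (P + 1) → R) × R) (i) :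
    (EE σ a).1 i = Fin.snoc (α := fun _ => R) a.1 a.2 i.1 := rfl
theorem EE_snd (σ : Finset (Fin (P + 2))) (a : (Fin (P + 1) → R) × R) (i) :
    (EE σ a).2 i = Fin.snoc (α := fun _ => R) a.1 a.2 i.1 := rfl
theorem EE_symm_fst (σ : Finset (Fin (P + 2))) (c) (i) :
    ((EE (R := R) σ).symm c).1 i = glue σ c.1 c.2 i.castSucc := rfl
theorem EE_symm_snd (σ : Finset (Fin (P + 2))) (c) :
    ((EE (R := R) σ).symm c).2 = glue σ c.1 c.2 (Fin.last _) := rfl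

/-- generators -/
def phi (y : Fin 3 → R) (z : R) (P : ℕ) (i : Fin (P + 2)) : R :=
  if h : (i : ℕ) < P + 1 then minorDelta y P ⟨(i : ℕ), h⟩ else z

theorem D1_EE (y : Fin 3 → R) (z : R) (σ : Finset (Fin (P + 2))) (c) :
    dlt y ((EE (R := R) σ).symm c).1 + z * ((EE σ).symm c).2
      = ∑ i, phi y z P i * glue σ c.1 c.2 i := by
  rw [Fin.sum_univ_castSucc, dlt_apply, EE_symm_snd]
  congr 1
  · refine Finset.sum_congr rfl fun i _ => ?_
    rw [EE_symm_fst]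
    have : phi y z P i.castSucc = minorDelta y P i := by
      rw [phi, dif_pos (by simp only [Fin.val_castSucc]; exact i.isLt)]; rfl
    rw [this]
  · simp [phi]

theorem range_trim [IsLocalRing R] {x : Fin 3 → R}
    (hm : Ideal.span {x 0, x 1, x 2} = maximalIdeal R)
    {n : ℕ} (φ : Fin n → R) (σ : Finset (Fin n))
    (f : (({i // i ∉ σ} → R) × ({i // i ∈ σ} × Fin 3 → R)) →ₗ[R] R)
    (hf : ∀ a, f a = ∑ i, φ i * glue σ a.1 (kε x {i // i ∈ σ} a.2) i) :
    LinearMap.range f = trimIdeal R φ σ := by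
  classical
  apply le_antisymm
  · rintro _ ⟨a, rfl⟩
    rw [hf]
    refine sum_mem fun i _ => ?_
    by_cases h : i ∈ σ
    · apply Submodule.mem_sup_right
      rw [mul_comm (φ i)]
      refine Ideal.mul_mem_mul (I := maximalIdeal R) (J := Ideal.span (φ '' {i | i ∈ σ})) ?_ ?_
      · simp only [glue, h, dif_pos]
        have := xmem hm
        exact add_mem (add_mem (Ideal.mul_mem_left _ _ (this 0)) (Ideal.mul_mem_left _ _ (this 1)))
          (Ideal.mul_mem_left _ _ (this 2))
      · exact Ideal.subset_span ⟨i, h, rfl⟩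
    · apply Submodule.mem_sup_left
      apply Ideal.mul_mem_right
      exact Ideal.subset_span ⟨i, h, rfl⟩
  · refine sup_le ?_ ?_
    · refine Ideal.span_le.2 ?_
      rintro _ ⟨i, hi, rfl⟩
      refine ⟨(Pi.single ⟨i, hi⟩ 1, 0), ?_⟩
      rw [hf, Finset.sum_eq_single i]
      · have hi' : i ∉ σ := hi
        simp [glue, hi']
      · intro b _ hb
        by_cases h : b ∈ σ
        · simp [glue, h]
        · simp [glue, h, Pi.single_apply, hb]
      · simp
    · rw [Ideal.mul_le]
      intro r hr s hs
      induction hs using Submodule.span_induction with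
      | mem s hs =>
        obtain ⟨i, hi, rfl⟩ := hs
        have hi' : i ∈ σ := hi
        obtain ⟨b, -, hb⟩ := mem_mul_repr hm ⊤ r (by rwa [Ideal.mul_top])
        refine ⟨(0, fun t => if t.1 = ⟨i, hi'⟩ then b t.2 else 0), ?_⟩
        rw [hf, Finset.sum_eq_single i]
        · rw [← hb]; simp [glue, hi', kε]; ring
        · intro c _ hc
          by_cases h : c ∈ σ
          · simp [glue, h, kε, hc]
          · simp [glue, h]
        · simp
      | zero => rw [mul_zero]; exact zero_mem _
      | add s t _ _ h1 h2 => rw [mul_add]; exact add_mem h1 h2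
      | smul c s _ h => rw [smul_eq_mul, mul_left_comm]; exact Submodule.smul_mem _ c h

/-- shifted extension by zero -/
def sh (w : Fin P → R) (n k : ℕ) : R := ∑ c : Fin P, if n = (c : ℕ) + k then w c else 0

theorem sh_eq (w : Fin P → R) (n k : ℕ) : sh w n k = if k ≤ n then ext0 w (n - k) else 0 := by
  have := sum_ext0 w 1 n k
  simpa [sh] using this

theorem sh_add (w w' : Fin P → R) (n k : ℕ) : sh (w + w') n k = sh w n k + sh w' n k := by
  simp only [sh, ← Finset.sum_add_distrib]
  exact Finset.sum_congr rfl fun c _ => by split_ifs <;> simp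

theorem sh_smul (r : R) (w : Fin P → R) (n k : ℕ) : sh (r • w) n k = r * sh w n k := by
  simp only [sh, Finset.mul_sum]
  exact Finset.sum_congr rfl fun c _ => by split_ifs <;> simp

theorem sh_mem (I : Ideal R) (w : Fin P → R) (hw : ∀ c, w c ∈ I) (n k : ℕ) : sh w n k ∈ I :=
  sum_mem fun c _ => by split_ifs <;> simp [hw]

theorem sh_at (w : Fin P → R) (n k : ℕ) (c : Fin P) (h : n = (c : ℕ) + k) : sh w n k = w c := by
  rw [sh, Finset.sum_eq_single c]
  · simp [h]
  · intro b _ hb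
    rw [if_neg]
    intro h'
    exact hb (Fin.ext (by omega))
  · simp

theorem mulVec_sh (y : Fin 3 → R) (w : Fin P → R) (i : Fin (P + 1)) :
    (Xmat y P).mulVec w i = y 0 * sh w i 0 + y 1 * sh w i 1 + y 2 * sh w i 2 := by
  rw [mulVec_X, sh_eq, sh_eq, sh_eq]
  simp only [Nat.zero_le, if_true, Nat.sub_zero]
  split_ifs <;> simp

/-- the comparison map `Q₁` -/
def qmap (σ : Finset (Fin (P + 2))) (u : Fin 3 → R) (z' : R) (g : Fin (P + 1) → Fin 3 → R) :
    ((Fin (P + 1) → R) × (Fin P → R)) →ₗ[R] ({i // i ∈ σ} × Fin 3 → R) where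
  toFun v t := Fin.snoc (α := fun _ => R)
    (fun i : Fin (P + 1) => u t.2 * sh v.2 i t.2 + if t.2 = 2 then z' * v.1 i else 0)
    (- ∑ jj, v.1 jj * g jj t.2) t.1.1
  map_add' v w := by
    funext ⟨⟨i, hi⟩, l⟩
    induction i using Fin.lastCases with
    | last => simp [add_mul, Finset.sum_add_distrib]; ring
    | cast i => simp [sh_add]; split_ifs <;> ring
  map_smul' r w := by
    funext ⟨⟨i, hi⟩, l⟩
    induction i using Fin.lastCases with
    | last => simp [mul_assoc, Finset.mul_sum]
    | cast i => simp [sh_smul]; split_ifs <;> ring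

theorem qmap_cast (σ : Finset (Fin (P + 2))) (u : Fin 3 → R) (z' : R)
    (g : Fin (P + 1) → Fin 3 → R) (v) (i : Fin (P + 1)) (hi : i.castSucc ∈ σ) (l : Fin 3) :
    qmap σ u z' g v (⟨i.castSucc, hi⟩, l)
      = u l * sh v.2 i l + if l = 2 then z' * v.1 i else 0 := by
  simp [qmap]

theorem qmap_last (σ : Finset (Fin (P + 2))) (u : Fin 3 → R) (z' : R)
    (g : Fin (P + 1) → Fin 3 → R) (v) (hi : Fin.last (P + 1) ∈ σ) (l : Fin 3) :
    qmap σ u z' g v (⟨Fin.last (P + 1), hi⟩, l) = - ∑ jj, v.1 jj * g jj l := by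
  simp [qmap]

end Conc
end TrimHB

open IsLocalRing

namespace TrimHB
section Core
variable {R : Type} [CommRing R] [IsLocalRing R] {P : ℕ}

/-- concrete set-up -/
structure CS (x u : Fin 3 → R) (z' : R) (P : ℕ) (g : Fin (P + 1) → Fin 3 → R)
    (W : (Fin (P + 1) → R) →ₗ[R] (Fin (P + 1) → R) →ₗ[R] (Fin P → R)) : Prop where
  hx : KReg x
  hm : Ideal.span {x 0, x 1, x 2} = maximalIdeal R
  H : HBH (fun l => x l * u l) (x 2 * z') P W
  zsq : z' ∈ maximalIdeal R ^ 2
  Wsq : ∀ a b c, W a b c ∈ maximalIdeal R ^ 2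
  gsq : ∀ j l, g j l ∈ maximalIdeal R ^ 2
  hg : ∀ j, g j 0 * x 0 + g j 1 * x 1 + g j 2 * x 2 = minorDelta (fun l => x l * u l) P j

theorem sq_le {r : R} (h : r ∈ maximalIdeal R ^ 2) : r ∈ maximalIdeal R :=
  Ideal.pow_le_self two_ne_zero h

namespace CS
variable {x u : Fin 3 → R} {z' : R} {g : Fin (P + 1) → Fin 3 → R}
  {W : (Fin (P + 1) → R) →ₗ[R] (Fin (P + 1) → R) →ₗ[R] (Fin P → R)}

theorem delta_sq (S : CS x u z' P g W) (j) :
    minorDelta (fun l => x l * u l) P j ∈ maximalIdeal R ^ 2 := by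
  rw [← S.hg]
  exact add_mem (add_mem (Ideal.mul_mem_right _ _ (S.gsq _ _)) (Ideal.mul_mem_right _ _ (S.gsq _ _)))
    (Ideal.mul_mem_right _ _ (S.gsq _ _))

theorem dlt_sq (S : CS x u z' P g W) (v : Fin (P + 1) → R) :
    dlt (fun l => x l * u l) v ∈ maximalIdeal R ^ 2 := by
  rw [dlt_apply]
  exact sum_mem fun j _ => Ideal.mul_mem_right _ _ (S.delta_sq j)

theorem z_sq (S : CS x u z' P g W) : x 2 * z' ∈ maximalIdeal R ^ 2 :=
  Ideal.mul_mem_left _ _ S.zsq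

theorem X_m (S : CS x u z' P g W) (w : Fin P → R) (i) :
    (Xmat (fun l => x l * u l) P).mulVec w i ∈ maximalIdeal R := by
  rw [mulVec_sh]
  have := xmem S.hm
  exact add_mem (add_mem (Ideal.mul_mem_right _ _ (Ideal.mul_mem_right _ _ (this _)))
    (Ideal.mul_mem_right _ _ (Ideal.mul_mem_right _ _ (this _))))
    (Ideal.mul_mem_right _ _ (Ideal.mul_mem_right _ _ (this _)))

/-- the resolution with split first module -/
noncomputable def DD (S : CS x u z' P g W) (σ : Finset (Fin (P + 2))) :=
  S.H.res.congr (EE σ) (LinearEquiv.refl R _) (LinearEquiv.refl R _)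

theorem DD_d1 (S : CS x u z' P g W) (σ : Finset (Fin (P + 2))) (a) :
    (S.DD σ).d1 a = S.H.res.d1 ((EE σ).symm a) := rfl
theorem DD_d2 (S : CS x u z' P g W) (σ : Finset (Fin (P + 2))) (a) :
    (S.DD σ).d2 a = EE σ (S.H.res.d2 a) := rfl
theorem DD_d3 (S : CS x u z' P g W) (σ : Finset (Fin (P + 2))) (a) :
    (S.DD σ).d3 a = S.H.res.d3 a := rfl
theorem DD_m11 (S : CS x u z' P g W) (σ : Finset (Fin (P + 2))) (a b) :
    (S.DD σ).m11 a b = S.H.res.m11 ((EE σ).symm a) ((EE σ).symm b) := rfl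

/-- the product of degrees one and two -/
noncomputable def mu (W : (Fin (P + 1) → R) →ₗ[R] (Fin (P + 1) → R) →ₗ[R] (Fin P → R))
    (σ : Finset (Fin (P + 2)))
    (a : ({i // i ∉ σ} → R) × ({i // i ∈ σ} → R)) (v : (Fin (P + 1) → R) × (Fin P → R)) :
    Fin P → R := ((EE σ).symm a).2 • v.2 - W ((EE σ).symm a).1 v.1

theorem kε_qmap (S : CS x u z' P g W) (σ : Finset (Fin (P + 2))) (v) :
    kε x _ (qmap σ u z' g v) = ((S.DD σ).d2 v).2 := by
  rw [DD_d2, S.H.res_d2]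
  funext ⟨i, hi⟩
  rw [EE_snd]
  have ke : ∀ k : {i // i ∈ σ} × Fin 3 → R, kε x {i // i ∈ σ} k ⟨i, hi⟩
    = k (⟨i, hi⟩, 0) * x 0 + k (⟨i, hi⟩, 1) * x 1 + k (⟨i, hi⟩, 2) * x 2 := fun _ => rfl
  rw [ke]
  clear ke
  induction i using Fin.lastCases with
  | last =>
    rw [qmap_last, qmap_last, qmap_last, Fin.snoc_last, dlt_apply]
    rw [neg_mul, neg_mul, neg_mul, ← neg_add, ← neg_add, Finset.sum_mul, Finset.sum_mul,
      Finset.sum_mul, ← Finset.sum_add_distrib, ← Finset.sum_add_distrib]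
    congr 1
    refine Finset.sum_congr rfl fun j _ => ?_
    rw [← S.hg]; ring
  | cast i =>
    rw [qmap_cast, qmap_cast, qmap_cast, Fin.snoc_castSucc]
    dsimp only
    rw [Pi.add_apply, mulVec_sh]
    simp only [Pi.smul_apply, smul_eq_mul]
    have e0 : ((0 : Fin 3) = 2) = False := by simp
    have e1 : ((1 : Fin 3) = 2) = False := by simp
    simp only [e0, e1, if_false, if_true]
    change (u 0 * sh v.2 i 0 + 0) * x 0 + (u 1 * sh v.2 i 1 + 0) * x 1
      + (u 2 * sh v.2 i 2 + z' * v.1 i) * x 2 = _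
    ring

theorem td (S : CS x u z' P g W) (σ : Finset (Fin (P + 2)))
    (Q : (Fin P → R) →ₗ[R] ({i // i ∈ σ} × Fin 3 → R))
    (hQ : ∀ w, k2 x _ (Q w) = qmap σ u z' g (-(Xmat (fun l => x l * u l) P).mulVec w, (x 2 * z') • w))
    (Qm : ∀ w i, Q w i ∈ maximalIdeal R)
    (Qmu : ∀ a z i, Q (mu W σ (thetaMap x _ _ a) z) i ∈ maximalIdeal R ^ 2) :
    TD (S.DD σ) x (qmap σ u z' g) Q (mu W σ) where
  hx := S.hx
  hm := S.hm
  d1sq a := by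
    rw [DD_d1, S.H.res_d1]
    exact add_mem (S.dlt_sq _) (Ideal.mul_mem_right _ _ S.z_sq)
  d3m a := by
    rw [DD_d3, S.H.res_d3]
    apply prod_mem_smul_top
    · exact neg_mem (pi_mem_smul_top _ fun i => S.X_m _ _)
    · exact smul_top_smul _ (sq_le S.z_sq) _
  hq v := S.kε_qmap σ v
  qsq a b t := by
    obtain ⟨⟨i, hi⟩, l⟩ := t
    rw [DD_m11, S.H.res_m11]
    induction i using Fin.lastCases with
    | last =>
      rw [qmap_last]
      exact neg_mem (sum_mem fun j _ => Ideal.mul_mem_left _ _ (S.gsq _ _))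
    | cast i =>
      rw [qmap_cast]
      refine add_mem (Ideal.mul_mem_left _ _ (sh_mem _ _ (fun c => S.Wsq _ _ c) _ _)) ?_
      split_ifs
      · exact Ideal.mul_mem_right _ _ S.zsq
      · exact zero_mem _
  hQ w := by rw [DD_d3, S.H.res_d3]; exact hQ w
  Qm := Qm
  hmu a v := by
    rw [DD_d3, DD_d1, DD_m11, DD_d2, LinearEquiv.symm_apply_apply]
    exact S.H.res_mu _ _
  Qmu := Qmu

theorem range_DD (S : CS x u z' P g W) (σ : Finset (Fin (P + 2))) :
    LinearMap.range ((S.DD σ).d1 ∘ₗ thetaMap x _ _)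
      = trimIdeal R (phi (fun l => x l * u l) (x 2 * z') P) σ := by
  apply range_trim S.hm
  intro a
  rw [LinearMap.comp_apply, DD_d1, S.H.res_d1, D1_EE]
  rfl

end CS
end Core
end TrimHB

open IsLocalRing

namespace TrimHB
section Core2
variable {R : Type} [CommRing R] [IsLocalRing R] {P : ℕ}
variable {x u : Fin 3 → R} {z' : R} {g : Fin (P + 1) → Fin 3 → R}
  {W : (Fin (P + 1) → R) →ₗ[R] (Fin (P + 1) → R) →ₗ[R] (Fin P → R)}

/-- degree one elements of the reduced complex, seen in the original resolution -/
noncomputable def lft (x : Fin 3 → R) (σ : Finset (Fin (P + 2)))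
    (p : {i // i ∈ σ} × Fin 3 → Prop)
    (a : ({i // i ∉ σ} → R) × ({t // p t} → R)) : (Fin (P + 1) → R) × R :=
  (EE σ).symm (thetaMap x _ _ (a.1, exz p a.2))

theorem CS.core (S : CS x u z' P g W) (σ : Finset (Fin (P + 2)))
    (Q : (Fin P → R) →ₗ[R] ({i // i ∈ σ} × Fin 3 → R))
    (hQ : ∀ w, k2 x _ (Q w) = qmap σ u z' g (-(Xmat (fun l => x l * u l) P).mulVec w, (x 2 * z') • w))
    (Qm : ∀ w i, Q w i ∈ maximalIdeal R)
    (Qmu : ∀ a z i, Q (mu W σ (thetaMap x _ _ a) z) i ∈ maximalIdeal R ^ 2)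
    (C : Finset (Fin P)) (piv : {c // c ∈ C} → {i // i ∈ σ} × Fin 3)
    (hp1 : ∀ c, ((piv c).1.1 : ℕ) = c.1 + (piv c).2) (hp3 : ∀ c, ((piv c).1.1 : ℕ) < P + 1)
    (hp2 : ∀ c, u (piv c).2 = 1)
    (hC : ∀ c, c ∉ C → ∀ i : Fin (P + 1), i.castSucc ∈ σ → ∀ l : Fin 3, (i : ℕ) = c + l →
      u l ∈ maximalIdeal R) :
    ∃ D : DGR R (trimIdeal R (phi (fun l => x l * u l) (x 2 * z') P) σ)
      (({i // i ∉ σ} → R) × ({t // t ∉ Set.range piv} → R))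
      (((Fin (P + 1) → R) × ({c // c ∉ C} → R)) × ({i // i ∈ σ} × Fin 3 → R))
      ((Fin P → R) × ({i // i ∈ σ} → R)), D.Min ∧
      (∀ a b, D.m11 a b - (((lft x σ _ a).2 • (lft x σ _ b).1 - (lft x σ _ b).2 • (lft x σ _ a).1, 0), 0)
        ∈ maximalIdeal R • (⊤ : Submodule R
          (((Fin (P + 1) → R) × ({c // c ∉ C} → R)) × ({i // i ∈ σ} × Fin 3 → R)))) ∧
      (∀ a z, ∃ w, D.d3 w = D.d1 a • z - D.m11 a (D.d2 z) ∧
        w - ((lft x σ _ a).2 • exz _ z.1.2, 0) ∈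
          maximalIdeal R • (⊤ : Submodule R ((Fin P → R) × ({i // i ∈ σ} → R)))) := by
  classical
  have H := S.td σ Q hQ Qm Qmu
  obtain ⟨T, t1, t2, t3, t4, t5, t6⟩ := exists_T H (S.range_DD σ)
  let ι1 : (({i // i ∉ σ} → R) × ({t // t ∉ Set.range piv} → R)) →ₗ[R]
      (({i // i ∉ σ} → R) × ({i // i ∈ σ} × Fin 3 → R)) :=
    LinearMap.prodMap LinearMap.id (exz _)
  let r1 : (({i // i ∉ σ} → R) × ({i // i ∈ σ} × Fin 3 → R)) →ₗ[R]
      (({i // i ∉ σ} → R) × ({t // t ∉ Set.range piv} → R)) :=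
    LinearMap.prodMap LinearMap.id (LinearMap.funLeft R R Subtype.val)
  let j : (((Fin (P + 1) → R) × ({c // c ∉ C} → R)) × ({i // i ∈ σ} × Fin 3 → R)) →ₗ[R]
      (((Fin (P + 1) → R) × (Fin P → R)) × ({i // i ∈ σ} × Fin 3 → R)) :=
    LinearMap.prodMap (LinearMap.prodMap LinearMap.id (exz _)) LinearMap.id
  let r2 : (((Fin (P + 1) → R) × (Fin P → R)) × ({i // i ∈ σ} × Fin 3 → R)) →ₗ[R]
      (((Fin (P + 1) → R) × ({c // c ∉ C} → R)) × ({i // i ∈ σ} × Fin 3 → R)) :=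
    LinearMap.prodMap (LinearMap.prodMap LinearMap.id (LinearMap.funLeft R R Subtype.val))
      LinearMap.id
  let e0 : ({i // i ∈ σ} × Fin 3 → R) →ₗ[R] (Fin P → R) :=
    exz (fun c => c ∈ C) ∘ₗ LinearMap.funLeft R R piv
  let e : (({i // i ∉ σ} → R) × ({i // i ∈ σ} × Fin 3 → R)) →ₗ[R]
      (((Fin (P + 1) → R) × (Fin P → R)) × ({i // i ∈ σ} × Fin 3 → R)) :=
    LinearMap.inl R _ _ ∘ₗ LinearMap.inr R _ _ ∘ₗ e0 ∘ₗ LinearMap.snd R _ _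
  have he : ∀ v, e v = ((0, e0 v.2), 0) := fun v => rfl
  have he0 : ∀ k c (h : c ∈ C), e0 k c = k (piv ⟨c, h⟩) := fun k c h => by
    change exz _ _ c = _
    rw [exz_pos _ c h]; rfl
  have he0' : ∀ k c, c ∉ C → e0 k c = 0 := fun k c h => exz_neg _ c h
  have hrex : ∀ {α : Type} (p : α → Prop) (f : {a // p a} → R),
      LinearMap.funLeft R R Subtype.val (exz p f) = f := by
    intro α p f
    funext a
    exact exz_pos f a.1 a.2
  have hpv : ∀ (w : Fin P → R) (c : {c // c ∈ C}), qmap σ u z' g (0, w) (piv c) = w c.1 := by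
    intro w c
    obtain ⟨i, hi⟩ : ∃ i : Fin (P + 1), i.castSucc = (piv c).1.1 :=
      ⟨⟨_, hp3 c⟩, rfl⟩
    have hiσ : i.castSucc ∈ σ := hi ▸ (piv c).1.2
    have : piv c = (⟨i.castSucc, hiσ⟩, (piv c).2) := by
      refine Prod.ext (Subtype.ext hi.symm) rfl
    rw [this, qmap_cast, hp2, sh_at w i _ c.1]
    · simp
    · rw [← hp1, ← hi]; rfl
  obtain ⟨D, hD, m, hz⟩ := exists_reduce T ι1 r1 j r2 e
    (fun v => Prod.ext rfl (hrex _ _))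
    (fun v => Prod.ext (Prod.ext rfl (hrex _ _)) rfl)
    (fun v => by
      rw [he]
      have : e0 (ι1 v).2 = 0 := by
        funext c
        by_cases h : c ∈ C
        · rw [he0 _ _ h]
          exact exz_neg (p := fun t => t ∉ Set.range piv) _ _ (not_not.2 ⟨_, rfl⟩)
        · exact he0' _ _ h
      rw [this]; rfl)
    (fun v => by
      refine Prod.ext (Prod.ext rfl ?_) rfl
      funext c
      exact he0' _ _ c.2)
    (fun v => by
      rw [he (T.d2 _), t2]
      refine Prod.ext (Prod.ext rfl ?_) rfl
      funext c
      change e0 (qmap σ u z' g (0, e0 v.2) + k2 x _ 0) c = e0 v.2 c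
      by_cases h : c ∈ C
      · rw [he0 _ _ h, map_zero, add_zero, hpv]
      · rw [he0' _ _ h, he0' _ _ h])
    (fun v hv => by
      refine Prod.ext rfl ?_
      funext t
      change exz (fun t => t ∉ Set.range piv) (LinearMap.funLeft R R Subtype.val v.2) t = v.2 t
      by_cases h : t ∈ Set.range piv
      · rw [exz_neg (p := fun t => t ∉ Set.range piv) _ t (not_not.2 h)]
        obtain ⟨c, rfl⟩ := h
        have := congrFun (congrArg (fun a => a.1.2) hv) c.1
        rw [he] at this
        simp only at this
        rw [he0 _ _ c.2] at this
        exact this.symm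
      · rw [exz_pos (p := fun t => t ∉ Set.range piv) _ t h]; rfl)
    (fun v hv => by
      refine ⟨(0, fun t => ext0 v.1.2 ((t.1.1 : ℕ) - t.2)), ?_⟩
      rw [he]
      refine Prod.ext (Prod.ext (congrArg (fun a => a.1.1) hv) ?_) (congrArg (fun a => a.2) hv)
      funext c
      change v.1.2 c = e0 (fun t => ext0 v.1.2 ((t.1.1 : ℕ) - t.2)) c
      by_cases h : c ∈ C
      · rw [he0 _ _ h]
        change _ = ext0 v.1.2 (((piv ⟨c, h⟩).1.1 : ℕ) - ((piv ⟨c, h⟩).2 : ℕ))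
        rw [hp1, Nat.add_sub_cancel, ext0_apply]
      · rw [he0' _ _ h]
        exact congrFun (congrArg (fun a => a.1.2) hv) ⟨c, h⟩)
    (fun v => by rw [t1]; exact sq_le (H.d1sq _))
    (fun v => by
      rw [t2]
      apply prod_mem_smul_top
      · apply pi_mem_smul_top
        intro i
        rw [S.DD_d2, S.H.res_d2, EE_fst]
        obtain ⟨i, hi⟩ := i
        induction i using Fin.lastCases with
        | last => rw [Fin.snoc_last]; exact neg_mem (sq_le (S.dlt_sq _))
        | cast i =>
          rw [Fin.snoc_castSucc]
          exact add_mem (Ideal.mul_mem_right _ _ (sq_le S.z_sq)) (S.X_m _ _)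
      · apply pi_mem_smul_top
        intro t
        refine add_mem ?_ ?_
        · obtain ⟨⟨i, hi⟩, l⟩ := t
          induction i using Fin.lastCases with
          | last =>
            rw [qmap_last]
            exact neg_mem (sum_mem fun j _ => Ideal.mul_mem_left _ _ (sq_le (S.gsq _ _)))
          | cast i =>
            rw [qmap_cast]
            refine add_mem ?_ ?_
            · rw [sh, Finset.mul_sum]
              refine sum_mem fun c _ => ?_
              split_ifs with hic
              · by_cases h : c ∈ C
                · have : (j v).1.2 c = 0 := exz_neg (p := fun c => c ∉ C) _ c (not_not.2 h)
                  rw [this, mul_zero]; exact zero_mem _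
                · exact Ideal.mul_mem_right _ _ (hC c h i hi l hic)
              · rw [mul_zero]; exact zero_mem _
            · split_ifs
              · exact Ideal.mul_mem_right _ _ (sq_le S.zsq)
              · exact zero_mem _
        · obtain ⟨b, l⟩ := t
          have := xmem S.hm
          fin_cases l <;>
          · simp only [k2, LinearMap.coe_mk, AddHom.coe_mk]
            exact sub_mem (Ideal.mul_mem_right _ _ (this _)) (Ideal.mul_mem_right _ _ (this _)))
    (fun v => by
      rw [t3]
      apply prod_mem_smul_top
      · exact H.d3m _
      · apply pi_mem_smul_top
        intro t
        exact add_mem (neg_mem (Qm _ _)) (Ideal.mul_mem_left _ _ (xmem S.hm _)))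
  refine ⟨D, hD, fun a b => ?_, fun a z => ?_⟩
  · rw [m]
    have h4 := t4 (ι1 a) (ι1 b)
    rw [S.DD_m11, S.H.res_m11] at h4
    apply prod_mem_smul_top
    · have : (r2 (T.m11 (ι1 a) (ι1 b))).1 = ((T.m11 (ι1 a) (ι1 b)).1.1,
        LinearMap.funLeft R R Subtype.val (T.m11 (ι1 a) (ι1 b)).1.2) := rfl
      rw [Prod.fst_sub, this, h4]
      apply prod_mem_smul_top
      · have : ∀ a, (EE σ).symm (thetaMap x _ _ (ι1 a)) = lft x σ _ a := fun a => rfl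
        simp only [this]
        rw [Prod.fst_sub, sub_self]
        exact zero_mem _
      · apply pi_mem_smul_top
        intro c
        rw [Prod.snd_sub]
        simp only [sub_zero]
        exact sq_le (S.Wsq _ _ _)
    · apply pi_mem_smul_top
      intro t
      rw [Prod.snd_sub]
      simp only [sub_zero]
      exact t5 _ _ _
  · obtain ⟨z1, h1, h2, h3⟩ := hz z
    obtain ⟨w, w1, w2, w3⟩ := t6 (ι1 a) z1 h2
    refine ⟨w, h3 a w w1, ?_⟩
    apply prod_mem_smul_top
    · rw [Prod.fst_sub, w2]
      apply pi_mem_smul_top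
      intro c
      have hh := smul_top_pi _ (map_mem_smul_top _ (LinearMap.snd R (Fin (P + 1) → R) (Fin P → R) ∘ₗ
        LinearMap.fst R _ ({i // i ∈ σ} × Fin 3 → R)) h1) c
      have e1 : mu W σ (thetaMap x _ _ (ι1 a)) z1.1 c = (lft x σ _ a).2 * z1.1.2 c
        - W (lft x σ _ a).1 z1.1.1 c := rfl
      have hh' : z1.1.2 c - exz _ z.1.2 c ∈ maximalIdeal R := hh
      change mu W σ (thetaMap x _ _ (ι1 a)) z1.1 c - (lft x σ _ a).2 * exz _ z.1.2 c ∈ _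
      rw [e1]
      have e2 : (lft x σ _ a).2 * z1.1.2 c - W (lft x σ _ a).1 z1.1.1 c
        - (lft x σ _ a).2 * exz _ z.1.2 c = (lft x σ _ a).2 * (z1.1.2 c - exz _ z.1.2 c)
        - W (lft x σ _ a).1 z1.1.1 c := by ring
      rw [e2]
      exact sub_mem (Ideal.mul_mem_left _ _ hh') (sq_le (S.Wsq _ _ _))
    · apply pi_mem_smul_top
      intro b
      rw [Prod.snd_sub]
      simp only [sub_zero]
      exact w3 b

end Core2
end TrimHB

open IsLocalRing

namespace TrimHB
section Concl
variable {R : Type} [CommRing R] [IsLocalRing R] {P : ℕ}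
variable {x u : Fin 3 → R} {z' : R} {g : Fin (P + 1) → Fin 3 → R}
  {W : (Fin (P + 1) → R) →ₗ[R] (Fin (P + 1) → R) →ₗ[R] (Fin P → R)}

/-- explicit second comparison map when the last index is not trimmed -/
def Qexp (u : Fin 3 → R) (z' : R) (σ : Finset (Fin (P + 2))) :
    (Fin P → R) →ₗ[R] ({i // i ∈ σ} × Fin 3 → R) where
  toFun w t := ![z' * (u 1 * sh w (t.1.1 : ℕ) 1), - (z' * (u 0 * sh w (t.1.1 : ℕ) 0)), 0] t.2
  map_add' w w' := by
    funext ⟨b, l⟩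
    fin_cases l <;> simp [sh_add] <;> ring
  map_smul' r w := by
    funext ⟨b, l⟩
    fin_cases l <;> simp [sh_smul] <;> ring

theorem Qexp_sq (hz : z' ∈ maximalIdeal R ^ 2) (σ : Finset (Fin (P + 2))) (w i) :
    Qexp u z' σ w i ∈ maximalIdeal R ^ 2 := by
  obtain ⟨b, l⟩ := i
  fin_cases l
  · exact Ideal.mul_mem_right _ _ hz
  · exact neg_mem (Ideal.mul_mem_right _ _ hz)
  · exact zero_mem _

theorem Qexp_hQ (σ : Finset (Fin (P + 2))) (hl : Fin.last (P + 1) ∉ σ) (w : Fin P → R) :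
    k2 x _ (Qexp u z' σ w)
      = qmap σ u z' g (-(Xmat (fun l => x l * u l) P).mulVec w, (x 2 * z') • w) := by
  funext ⟨⟨i, hi⟩, l⟩
  induction i using Fin.lastCases with
  | last => exact absurd hi hl
  | cast i =>
    rw [qmap_cast]
    simp only [Pi.neg_apply, mulVec_sh, sh_smul]
    fin_cases l <;> simp [k2, Qexp] <;> ring

theorem CS.exists_Q (S : CS x u z' P g W) (σ : Finset (Fin (P + 2))) :
    ∃ Q : (Fin P → R) →ₗ[R] ({i // i ∈ σ} × Fin 3 → R),
      (∀ w, k2 x _ (Q w)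
        = qmap σ u z' g (-(Xmat (fun l => x l * u l) P).mulVec w, (x 2 * z') • w)) ∧
      (∀ w i, Q w i ∈ maximalIdeal R) := by
  classical
  have key : ∀ w : Fin P → R, ∃ k, (∀ i, k i ∈ maximalIdeal R) ∧ k2 x {i // i ∈ σ} k
      = qmap σ u z' g (-(Xmat (fun l => x l * u l) P).mulVec w, (x 2 * z') • w) := by
    intro w
    apply kε_ex_sq S.hx S.hm
    · have hd : (S.DD σ).d2 ((S.DD σ).d3 w) = 0 := (S.DD σ).dd2 w
      rw [S.DD_d3, S.H.res_d3] at hd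
      rw [S.kε_qmap, hd]; rfl
    · rintro ⟨⟨i, hi⟩, l⟩
      induction i using Fin.lastCases with
      | last =>
        rw [qmap_last]
        exact neg_mem (sum_mem fun j _ => Ideal.mul_mem_left _ _ (S.gsq _ _))
      | cast i =>
        rw [qmap_cast]
        refine add_mem (Ideal.mul_mem_left _ _ ?_) ?_
        · rw [sh_smul]
          exact Ideal.mul_mem_right _ _ S.z_sq
        · split_ifs
          · exact Ideal.mul_mem_right _ _ S.zsq
          · exact zero_mem _
  choose k hk1 hk2 using key
  let L : (Fin P → R) →ₗ[R] ((Fin (P + 1) → R) × (Fin P → R)) :=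
    LinearMap.prod (-(Xmat (fun l => x l * u l) P).mulVecLin) ((x 2 * z') • LinearMap.id)
  have hL : ∀ w, L w = (-(Xmat (fun l => x l * u l) P).mulVec w, (x 2 * z') • w) := fun w => rfl
  refine ⟨(Pi.basisFun R (Fin P)).constr R (fun c => k (Pi.single c 1)), fun w => ?_, fun w i => ?_⟩
  · rw [← hL]
    change (k2 x _ ∘ₗ (Pi.basisFun R (Fin P)).constr R (fun c => k (Pi.single c 1))) w
      = (qmap σ u z' g ∘ₗ L) w
    congr 1
    apply (Pi.basisFun R (Fin P)).ext
    intro c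
    rw [LinearMap.comp_apply, Module.Basis.constr_basis, hk2, LinearMap.comp_apply, hL,
      Pi.basisFun_apply]
  · rw [Module.Basis.constr_apply_fintype]
    simp only [Finset.sum_apply, Pi.smul_apply, smul_eq_mul]
    exact sum_mem fun c _ => Ideal.mul_mem_left _ _ (hk1 _ _)

theorem lin_mem_sq {ι : Type} (Q : (Fin P → R) →ₗ[R] (ι → R)) (I : Ideal R)
    (Qm : ∀ w i, Q w i ∈ I)
    (w : Fin P → R) (hw : ∀ c, w c ∈ I) (i) : Q w i ∈ I ^ 2 := by
  classical
  have : w = ∑ c, w c • (Pi.single c 1 : Fin P → R) := by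
    rw [← pi_eq_sum_univ' w]
  rw [this, map_sum]
  simp only [Finset.sum_apply, map_smul, Pi.smul_apply, smul_eq_mul, sq]
  exact sum_mem fun c _ => Ideal.mul_mem_mul (hw c) (Qm _ _)

theorem kε_mem (hm : Ideal.span {x 0, x 1, x 2} = maximalIdeal R) {B : Type}
    (k : B × Fin 3 → R) (b) : kε x B k b ∈ maximalIdeal R := by
  have := xmem hm
  exact add_mem (add_mem (Ideal.mul_mem_left _ _ (this 0)) (Ideal.mul_mem_left _ _ (this 1)))
          (Ideal.mul_mem_left _ _ (this 2))

theorem theta_last (hm : Ideal.span {x 0, x 1, x 2} = maximalIdeal R) (σ : Finset (Fin (P + 2)))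
    (hl : Fin.last (P + 1) ∈ σ) (a) :
    ((EE σ).symm (thetaMap x {i // i ∉ σ} {i // i ∈ σ} a)).2 ∈ maximalIdeal R := by
  rw [EE_symm_snd, glue, dif_pos hl]
  exact kε_mem hm _ _

theorem mem_of_sub_mem {M : Type} [AddCommGroup M] [Module R M] {N : Submodule R M} {a b c : M}
    (h : a - b ∈ N) (hb : b - c ∈ N) : a - c ∈ N := by
  have := add_mem h hb
  rwa [sub_add_sub_cancel] at this

theorem CS.golod (S : CS x u z' P g W) (σ : Finset (Fin (P + 2))) (hl : Fin.last (P + 1) ∈ σ)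
    (C : Finset (Fin P)) (piv : {c // c ∈ C} → {i // i ∈ σ} × Fin 3)
    (hp1 : ∀ c, ((piv c).1.1 : ℕ) = c.1 + (piv c).2) (hp3 : ∀ c, ((piv c).1.1 : ℕ) < P + 1)
    (hp2 : ∀ c, u (piv c).2 = 1)
    (hC : ∀ c, c ∉ C → ∀ i : Fin (P + 1), i.castSucc ∈ σ → ∀ l : Fin 3, (i : ℕ) = c + l →
      u l ∈ maximalIdeal R) :
    IsGolodQuotient R (trimIdeal R (phi (fun l => x l * u l) (x 2 * z') P) σ) := by
  classical
  obtain ⟨Q, hQ, Qm⟩ := S.exists_Q σ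
  obtain ⟨D, hD, h11, h12⟩ := S.core σ Q hQ Qm (fun a z i => by
    apply lin_mem_sq Q _ Qm
    intro c
    exact sub_mem (Ideal.mul_mem_right _ _ (theta_last S.hm σ hl a)) (sq_le (S.Wsq _ _ _)))
    C piv hp1 hp3 hp2 hC
  have hlft : ∀ a, (lft x σ (fun t => t ∉ Set.range piv) a).2 ∈ maximalIdeal R :=
    fun a => theta_last S.hm σ hl _
  refine golod_of ((Pi.basisFun R _).prod (Pi.basisFun R _))
    (((Pi.basisFun R _).prod (Pi.basisFun R _)).prod (Pi.basisFun R _))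
    ((Pi.basisFun R _).prod (Pi.basisFun R _)) D hD ⟨fun a b => ?_, fun a z => ?_⟩
  · refine mem_of_sub_mem (h11 a b) ?_
    simp only [LinearMap.zero_apply, smul_zero, sub_zero]
    exact prod_mem_smul_top _ (prod_mem_smul_top _ (sub_mem (smul_top_smul _ (hlft a) _)
      (smul_top_smul _ (hlft b) _)) (zero_mem _)) (zero_mem _)
  · obtain ⟨w, h1, h2⟩ := h12 a z
    refine ⟨w, h1, mem_of_sub_mem h2 ?_⟩
    simp only [LinearMap.zero_apply, smul_zero, sub_zero]
    exact prod_mem_smul_top _ (smul_top_smul _ (hlft a) _) (zero_mem _)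

end Concl
end TrimHB

open IsLocalRing

namespace TrimHB
section ConclH
variable {R : Type} [CommRing R] [IsLocalRing R] {P : ℕ}
variable {x u : Fin 3 → R} {z' : R} {g : Fin (P + 1) → Fin 3 → R}
  {W : (Fin (P + 1) → R) →ₗ[R] (Fin (P + 1) → R) →ₗ[R] (Fin P → R)}

theorem exz_single {α : Type} [DecidableEq α] (p : α → Prop) (a : {a // p a}) :
    exz p (Pi.single a (1 : R)) = Pi.single a.1 1 := by
  classical
  funext b
  by_cases h : p b
  · rw [exz_pos _ b h]
    simp [Pi.single_apply, Subtype.ext_iff]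
  · rw [exz_neg _ b h]
    have : b ≠ a.1 := fun e => h (e ▸ a.2)
    simp [Pi.single_apply, this]

theorem CS.classH (S : CS x u z' P g W) (σ : Finset (Fin (P + 2))) (hl : Fin.last (P + 1) ∉ σ)
    (C : Finset (Fin P)) (piv : {c // c ∈ C} → {i // i ∈ σ} × Fin 3)
    (hp1 : ∀ c, ((piv c).1.1 : ℕ) = c.1 + (piv c).2) (hp3 : ∀ c, ((piv c).1.1 : ℕ) < P + 1)
    (hp2 : ∀ c, u (piv c).2 = 1)
    (hC : ∀ c, c ∉ C → ∀ i : Fin (P + 1), i.castSucc ∈ σ → ∀ l : Fin 3, (i : ℕ) = c + l →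
      u l ∈ maximalIdeal R) :
    HasTorClassH R (trimIdeal R (phi (fun l => x l * u l) (x 2 * z') P) σ)
      (P + 1 - σ.card) (P - C.card) := by
  classical
  obtain ⟨D, hD, h11, h12⟩ := S.core σ (Qexp u z' σ) (Qexp_hQ σ hl)
    (fun w i => sq_le (Qexp_sq S.zsq σ w i)) (fun a z i => Qexp_sq S.zsq σ _ i)
    C piv hp1 hp3 hp2 hC
  let s : (({i // i ∉ σ} → R) × ({t // t ∉ Set.range piv} → R)) →ₗ[R] R :=
    LinearMap.proj (⟨Fin.last _, hl⟩ : {i // i ∉ σ}) ∘ₗ LinearMap.fst R _ _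
  let U : (({i // i ∉ σ} → R) × ({t // t ∉ Set.range piv} → R)) →ₗ[R]
      (((Fin (P + 1) → R) × ({c // c ∉ C} → R)) × ({i // i ∈ σ} × Fin 3 → R)) :=
    LinearMap.inl R _ _ ∘ₗ LinearMap.inl R _ _ ∘ₗ LinearMap.funLeft R R Fin.castSucc ∘ₗ
      exz (fun i => i ∉ σ) ∘ₗ LinearMap.fst R _ _
  let V : (((Fin (P + 1) → R) × ({c // c ∉ C} → R)) × ({i // i ∈ σ} × Fin 3 → R)) →ₗ[R]
      ((Fin P → R) × ({i // i ∈ σ} → R)) :=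
    LinearMap.inl R _ _ ∘ₗ exz (fun c => c ∉ C) ∘ₗ LinearMap.snd R _ _ ∘ₗ LinearMap.fst R _ _
  have hs : ∀ a, (lft x σ (fun t => t ∉ Set.range piv) a).2 = s a := by
    intro a
    rw [lft, EE_symm_snd, glue, dif_neg hl]; rfl
  have hU0 : ∀ a, U a = ((fun i => exz (fun i => i ∉ σ) a.1 i.castSucc, 0), 0) := fun a => rfl
  have hV0 : ∀ a, V a = (exz (fun c => c ∉ C) a.1.2, 0) := fun a => rfl
  have hU : ∀ a i, (lft x σ (fun t => t ∉ Set.range piv) a).1 i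
      - exz (fun i => i ∉ σ) a.1 i.castSucc ∈ maximalIdeal R := by
    intro a i
    rw [lft, EE_symm_fst, glue]
    by_cases h : i.castSucc ∈ σ
    · rw [dif_pos h, exz_neg (p := fun i => i ∉ σ) _ _ (not_not.2 h), sub_zero]
      exact kε_mem S.hm _ _
    · rw [dif_neg h, exz_pos (p := fun i => i ∉ σ) _ _ h]
      have : ∀ b : R, b - b ∈ maximalIdeal R := fun b => by rw [sub_self]; exact zero_mem _
      exact this _
  have hP : D.Prod s U V := by
    refine ⟨fun a b => ?_, fun a z => ?_⟩
    · refine mem_of_sub_mem (h11 a b) ?_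
      rw [hU0, hU0, hs, hs]
      refine prod_mem_smul_top _ (prod_mem_smul_top _ ?_ ?_) ?_
      · apply pi_mem_smul_top
        intro i
        have := sub_mem (Ideal.mul_mem_left _ (s a) (hU b i)) (Ideal.mul_mem_left _ (s b) (hU a i))
        convert this using 1
        simp only [Prod.fst_sub, Prod.smul_fst, Pi.sub_apply, Pi.smul_apply, smul_eq_mul]
        ring
      · simp
      · simp
    · obtain ⟨w, h1, h2⟩ := h12 a z
      refine ⟨w, h1, mem_of_sub_mem h2 ?_⟩
      rw [hV0, hs]
      simp
  have hcκ : Fintype.card {i : Fin (P + 1) // i.castSucc ∉ σ} = P + 1 - σ.card := by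
    have e : σ = (Finset.univ.filter fun i : Fin (P + 1) => i.castSucc ∈ σ).map Fin.castSuccEmb := by
      ext i
      induction i using Fin.lastCases with
      | last => simp [hl]
      | cast i => simp
    have e2 : σ.card = (Finset.univ.filter fun i : Fin (P + 1) => i.castSucc ∈ σ).card := by
      conv_lhs => rw [e]
      rw [Finset.card_map]
    rw [Fintype.card_subtype_compl, Fintype.card_subtype, ← e2, Fintype.card_fin]
  have hcγ : Fintype.card {c // c ∉ C} = P - C.card := by
    rw [Fintype.card_subtype_compl, Fintype.card_coe, Fintype.card_fin]
  rw [← hcκ, ← hcγ]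
  refine classH_of ((Pi.basisFun R _).prod (Pi.basisFun R _))
    (((Pi.basisFun R _).prod (Pi.basisFun R _)).prod (Pi.basisFun R _))
    ((Pi.basisFun R _).prod (Pi.basisFun R _)) D hD s U V hP
    (fun i : {i : Fin (P + 1) // i.castSucc ∉ σ} => Sum.inl ⟨i.1.castSucc, i.2⟩)
    (Sum.inl ⟨Fin.last _, hl⟩) (fun i => Sum.inl (Sum.inl i.1)) (fun c => Sum.inl (Sum.inr c))
    (fun c => Sum.inl c.1) ?_ ?_ ?_ ?_ ?_ ?_ ?_ ?_ ?_ ?_ ?_ ?_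
  · intro i j h
    simpa [Subtype.ext_iff] using h
  · intro i h
    have := congrArg Subtype.val (Sum.inl.inj h)
    exact absurd this (Fin.castSucc_lt_last _).ne
  · intro i j h
    simpa [Subtype.ext_iff] using h
  · intro i j h
    simpa [Subtype.ext_iff] using h
  · intro i c h
    simp at h
  · intro i j h
    simpa [Subtype.ext_iff] using h
  · simp [s]
  · rintro (i | i) h
    · have : (⟨Fin.last _, hl⟩ : {i // i ∉ σ}) ≠ i := fun e => h (by rw [e])
      simp [s, Pi.single_apply, this]
    · simp [s]
  · intro i
    have h1 : (exz (fun i => i ∉ σ)) (Pi.single (⟨i.1.castSucc, i.2⟩ : {i // i ∉ σ}) (1 : R)) = _ := exz_single _ _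
    rw [hU0]
    simp only [Module.Basis.prod_apply, Sum.elim_inl, Function.comp, LinearMap.inl_apply, Pi.basisFun_apply]
    rw [h1]
    refine Prod.ext (Prod.ext ?_ rfl) rfl
    funext j
    simp [Pi.single_apply]
  · rintro (i | i) h
    · rw [hU0]
      simp only [Module.Basis.prod_apply, Sum.elim_inl, Function.comp, LinearMap.inl_apply, Pi.basisFun_apply]
      rw [exz_single]
      refine Prod.ext (Prod.ext ?_ rfl) rfl
      funext j
      have : j.castSucc ≠ i.1 := fun e => h ⟨j, e ▸ i.2⟩ (congrArg Sum.inl (Subtype.ext e))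
      simp [Pi.single_apply, this]
    · rw [hU0]
      simp only [Module.Basis.prod_apply, Sum.elim_inr, Function.comp, LinearMap.inr_apply, map_zero]
      rfl
  · intro c
    rw [hV0]
    simp only [Module.Basis.prod_apply, Sum.elim_inl, Sum.elim_inr, Function.comp, LinearMap.inl_apply, LinearMap.inr_apply, Pi.basisFun_apply]
    rw [exz_single]
  · rintro ((i | i) | i) h
    · rw [hV0]
      simp [Module.Basis.prod_apply]
    · exact absurd rfl (h i)
    · rw [hV0]
      simp [Module.Basis.prod_apply]

end ConclH
end TrimHB

open IsLocalRing

namespace TrimHB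
section Build
variable {R : Type} [CommRing R] [IsNoetherianRing R] [IsLocalRing R] {P : ℕ}
  {x : Fin 3 → R}

theorem perm_kreg (hreg : RingTheory.Sequence.IsRegular R [x 0, x 1, x 2]) :
    KReg ![x 2, x 0, x 1] := by
  apply kreg_of_weakly
  refine (IsLocalRing.isRegular_of_perm hreg ?_).toIsWeaklyRegular
  exact (List.perm_append_comm (l₁ := [x 0, x 1]) (l₂ := [x 2]))

theorem kreg_self (hreg : RingTheory.Sequence.IsRegular R [x 0, x 1, x 2]) : KReg x := by
  have h := kreg_of_weakly _ _ _ hreg.toIsWeaklyRegular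
  exact ⟨h.r0, h.r1, h.r2⟩

theorem exists_CS (hreg : RingTheory.Sequence.IsRegular R [x 0, x 1, x 2])
    (hm : Ideal.span {x 0, x 1, x 2} = maximalIdeal R) (hP : 3 ≤ P) (u : Fin 3 → R) (n : ℕ)
    (hn : 2 ≤ n)
    (h0 : ∀ a, (x 0 * u 0) * a = 0 → a = 0)
    (h1 : ∀ a b, (x 1 * u 1) * a = (x 0 * u 0) * b → ∃ c, a = (x 0 * u 0) * c)
    (h2 : ∀ a b, (x 0 * u 0) * a = x 2 * b → ∃ c, a = x 2 * c)
    (h3 : ∀ a b c, (x 1 * u 1) * a = x 2 * b + (x 0 * u 0) * c →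
      ∃ d e, a = x 2 * d + (x 0 * u 0) * e) :
    ∃ g W, CS x u (x 2 ^ n) P g W := by
  have hk := perm_kreg hreg
  have hym : ∀ l, x l * u l ∈ maximalIdeal R := fun l => Ideal.mul_mem_right _ _ (xmem hm l)
  obtain ⟨W, hW, hWm⟩ := exists_W (P := P) (fun l => x l * u l) h0
  have hg : ∀ j, ∃ b : Fin 3 → R, (∀ l, b l ∈ maximalIdeal R ^ 2) ∧
      b 0 * x 0 + b 1 * x 1 + b 2 * x 2 = minorDelta (fun l => x l * u l) P j := by
    intro j
    apply mem_mul_repr hm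
    rw [← pow_succ']
    exact Ideal.pow_le_pow_right hP (delta_mem _ _ hym j)
  choose g hg1 hg2 using hg
  refine ⟨g, W, ⟨kreg_self hreg, hm, ⟨h0, h1, ?_, hW⟩, ?_, ?_, hg1, hg2⟩⟩
  · have := t_reg_pow (P := P) (fun l => x l * u l) (x 2)
      (t_reg (fun l => x l * u l) (x 2) hk.r0 h2 h3) (n + 1)
    rwa [pow_succ'] at this
  · exact Ideal.pow_le_pow_right hn (Ideal.pow_mem_pow (xmem hm 2) n)
  · intro a b c
    exact Ideal.pow_le_pow_right (by omega) (hWm _ hym a b c)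

theorem exists_CS1 (hreg : RingTheory.Sequence.IsRegular R [x 0, x 1, x 2])
    (hm : Ideal.span {x 0, x 1, x 2} = maximalIdeal R) (hP : 3 ≤ P) :
    ∃ g W, CS x (fun _ => 1) (x 2 ^ (P - 1)) P g W := by
  have hk := perm_kreg hreg
  have hs := kreg_self hreg
  apply exists_CS hreg hm hP _ _ (by omega)
  · simpa using hs.r0
  · simpa using hs.r1
  · simpa using hk.r1
  · simpa using hk.r2

theorem exists_CS2 (hreg : RingTheory.Sequence.IsRegular R [x 0, x 1, x 2])
    (hm : Ideal.span {x 0, x 1, x 2} = maximalIdeal R) (hP : 3 ≤ P) :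
    ∃ g W, CS x x (x 2 ^ (2 * P - 1)) P g W := by
  have hk := perm_kreg hreg
  have hs := kreg_self hreg
  have a1 : ∀ a b, x 0 * a = x 2 * b → ∃ c, a = x 2 * c := hk.r1
  have a2 : ∀ a b c, x 1 * a = x 2 * b + x 0 * c → ∃ d e, a = x 2 * d + x 0 * e := hk.r2
  obtain ⟨b1, b2⟩ := sq_reg (x 0) (x 1) hs.r0 hs.r1
  apply exists_CS hreg hm hP _ _ (by omega)
  · simpa [sq] using b1
  · simpa [sq] using b2
  · intro a b h
    obtain ⟨c, hc⟩ := a1 (x 0 * a) b (by linear_combination h)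
    exact a1 a c hc
  · have key : ∀ a b c, x 1 * a = x 2 * b + x 0 * x 0 * c →
        ∃ d e, a = x 2 * d + x 0 * x 0 * e := by
      intro a b c h
      obtain ⟨d, e, rfl⟩ := a2 a b (x 0 * c) (by linear_combination h)
      obtain ⟨k, hk⟩ := a1 (x 1 * e - x 0 * c) (b - x 1 * d) (by linear_combination h)
      obtain ⟨d', e', rfl⟩ := a2 e k c (by linear_combination hk)
      exact ⟨d + x 0 * d', e', by ring⟩
    intro a b c h
    obtain ⟨d, e, hd⟩ := key (x 1 * a) b c (by linear_combination h)
    exact key a d e hd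

theorem phi1 (hP : 3 ≤ P) : phi (fun l => x l * (1 : R)) (x 2 * x 2 ^ (P - 1)) P
    = fun i : Fin (P + 2) => if h : (i : ℕ) < P + 1
            then minorDelta x P ⟨(i : ℕ), h⟩ else x 2 ^ P := by
  have : x 2 * x 2 ^ (P - 1) = x 2 ^ P := by rw [← pow_succ']; congr 1; omega
  simp only [mul_one, this]
  rfl

theorem phi2 (hP : 3 ≤ P) : phi (fun l => x l * x l) (x 2 * x 2 ^ (2 * P - 1)) P
    = fun i : Fin (P + 2) => if h : (i : ℕ) < P + 1
            then minorDelta' x P ⟨(i : ℕ), h⟩ else x 2 ^ (2 * P) := by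
  have : x 2 * x 2 ^ (2 * P - 1) = x 2 ^ (2 * P) := by rw [← pow_succ']; congr 1; omega
  simp only [← sq, this]
  rfl

open Classical in
/-- columns of the comparison map which are nonzero modulo the maximal ideal -/
noncomputable def Cset (σ : Finset (Fin (P + 2))) : Finset (Fin P) :=
  Finset.univ.filter fun c => ∃ t : {i // i ∈ σ} × Fin 3, (t.1.1 : ℕ) = c + t.2 ∧ (t.1.1 : ℕ) < P + 1

theorem mem_Cset {σ : Finset (Fin (P + 2))} {c : Fin P} : c ∈ Cset σ ↔
    ∃ t : {i // i ∈ σ} × Fin 3, (t.1.1 : ℕ) = c + t.2 ∧ (t.1.1 : ℕ) < P + 1 := by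
  simp [Cset]

theorem exists_piv (σ : Finset (Fin (P + 2))) : ∃ piv : {c // c ∈ Cset σ} → {i // i ∈ σ} × Fin 3,
    (∀ c, ((piv c).1.1 : ℕ) = c.1 + (piv c).2) ∧ (∀ c, ((piv c).1.1 : ℕ) < P + 1) := by
  have : ∀ c : {c // c ∈ Cset σ}, ∃ t : {i // i ∈ σ} × Fin 3,
    (t.1.1 : ℕ) = c.1 + t.2 ∧ (t.1.1 : ℕ) < P + 1 := fun c => mem_Cset.1 c.2
  choose piv h1 h2 using this
  exact ⟨piv, h1, h2⟩

theorem Cset_hC (σ : Finset (Fin (P + 2))) (c : Fin P) (hc : c ∉ Cset σ) (i : Fin (P + 1))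
    (hi : i.castSucc ∈ σ) (l : Fin 3) (h : (i : ℕ) = c + l) : (1 : R) ∈ maximalIdeal R :=
  absurd (mem_Cset.2 ⟨(⟨i.castSucc, hi⟩, l), h, i.isLt⟩) hc

theorem classH1 (hreg : RingTheory.Sequence.IsRegular R [x 0, x 1, x 2])
    (hm : Ideal.span {x 0, x 1, x 2} = maximalIdeal R) (hP : 3 ≤ P) (σ : Finset (Fin (P + 2)))
    (hl : Fin.last (P + 1) ∉ σ) :
    HasTorClassH R (trimIdeal R
          (fun i : Fin (P + 2) => if h : (i : ℕ) < P + 1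
            then minorDelta x P ⟨(i : ℕ), h⟩ else x 2 ^ P) σ)
          (P + 1 - σ.card) (P - (Cset σ).card) := by
  obtain ⟨g, W, S⟩ := exists_CS1 hreg hm hP
  obtain ⟨piv, h1, h2⟩ := exists_piv σ
  rw [← phi1 hP]
  exact S.classH σ hl (Cset σ) piv h1 h2 (fun _ => rfl) (Cset_hC σ)

theorem golod1 (hreg : RingTheory.Sequence.IsRegular R [x 0, x 1, x 2])
    (hm : Ideal.span {x 0, x 1, x 2} = maximalIdeal R) (hP : 3 ≤ P) (σ : Finset (Fin (P + 2)))
    (hl : Fin.last (P + 1) ∈ σ) :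
    IsGolodQuotient R (trimIdeal R
          (fun i : Fin (P + 2) => if h : (i : ℕ) < P + 1
            then minorDelta x P ⟨(i : ℕ), h⟩ else x 2 ^ P) σ) := by
  obtain ⟨g, W, S⟩ := exists_CS1 hreg hm hP
  obtain ⟨piv, h1, h2⟩ := exists_piv σ
  rw [← phi1 hP]
  exact S.golod σ hl (Cset σ) piv h1 h2 (fun _ => rfl) (Cset_hC σ)

theorem classH2 (hreg : RingTheory.Sequence.IsRegular R [x 0, x 1, x 2])
    (hm : Ideal.span {x 0, x 1, x 2} = maximalIdeal R) (hP : 3 ≤ P) (σ : Finset (Fin (P + 2)))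
    (hl : Fin.last (P + 1) ∉ σ) :
    HasTorClassH R (trimIdeal R
          (fun i : Fin (P + 2) => if h : (i : ℕ) < P + 1
            then minorDelta' x P ⟨(i : ℕ), h⟩ else x 2 ^ (2 * P)) σ)
          (P + 1 - σ.card) P := by
  obtain ⟨g, W, S⟩ := exists_CS2 hreg hm hP
  rw [← phi2 hP]
  have e : ∀ c : {c // c ∈ (∅ : Finset (Fin P))}, False := fun c => absurd c.2 (Finset.notMem_empty _)
  exact S.classH σ hl ∅ (fun c => (e c).elim) (fun c => (e c).elim) (fun c => (e c).elim)
    (fun c => (e c).elim) (fun _ _ _ _ l _ => xmem hm l)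

theorem golod2 (hreg : RingTheory.Sequence.IsRegular R [x 0, x 1, x 2])
    (hm : Ideal.span {x 0, x 1, x 2} = maximalIdeal R) (hP : 3 ≤ P) (σ : Finset (Fin (P + 2)))
    (hl : Fin.last (P + 1) ∈ σ) :
    IsGolodQuotient R (trimIdeal R
          (fun i : Fin (P + 2) => if h : (i : ℕ) < P + 1
            then minorDelta' x P ⟨(i : ℕ), h⟩ else x 2 ^ (2 * P)) σ) := by
  obtain ⟨g, W, S⟩ := exists_CS2 hreg hm hP
  rw [← phi2 hP]
  have e : ∀ c : {c // c ∈ (∅ : Finset (Fin P))}, False := fun c => absurd c.2 (Finset.notMem_empty _)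
  exact S.golod σ hl ∅ (fun c => (e c).elim) (fun c => (e c).elim) (fun c => (e c).elim)
    (fun c => (e c).elim) (fun _ _ _ _ l _ => xmem hm l)

theorem Cset_card_init (t : ℕ) (ht : t < P + 1) :
    (Cset (Finset.univ.filter (fun i : Fin (P + 2) => (i : ℕ) < t))).card = t := by
  have : Cset (Finset.univ.filter (fun i : Fin (P + 2) => (i : ℕ) < t))
      = Finset.univ.filter (fun c : Fin P => (c : ℕ) < t) := by
    ext c
    rw [mem_Cset]
    simp only [Finset.mem_filter, Finset.mem_univ, true_and]
    constructor
    · rintro ⟨⟨⟨i, hi⟩, l⟩, h, -⟩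
      have := (Finset.mem_filter.1 hi).2
      simp only at h
      omega
    · intro h
      exact ⟨(⟨⟨c, by omega⟩, by simpa using h⟩, 0), by simp, by simp only; omega⟩
  rw [this]
  rw [Fin.card_filter_val_lt]
  omega

theorem rank_aux {K : Type} [CommRing K] [Nontrivial K] (σ : Finset (Fin (P + 2)))
    (hlt : ∀ i : {i // i ∈ σ}, ((i : Fin (P + 2)) : ℕ) < P + 1)
    (M : Matrix ({i // i ∈ σ} × Fin 3) (Fin (P + 1) ⊕ Fin P) K)
    (h0 : ∀ t a, M t (Sum.inl a) = 0)
    (h1 : ∀ t c, M t (Sum.inr c) = if (t.1.1 : ℕ) = c + t.2 then 1 else 0) :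
    M.rank = (Cset σ).card := by
  classical
  obtain ⟨piv, hp1, hp2⟩ := exists_piv σ
  have hli : LinearIndependent K (fun c : {c // c ∈ Cset σ} => M.col (Sum.inr c.1)) := by
    rw [Fintype.linearIndependent_iff]
    intro f hf c
    have := congrFun hf (piv c)
    rw [Finset.sum_apply, Finset.sum_eq_single c] at this
    · simpa [Matrix.col_apply, h1, hp1 c] using this
    · intro b _ hb
      have hne : ¬ ((c.1 : ℕ) = b.1) := fun e => hb (Subtype.ext (Fin.ext e.symm))
      simp [Matrix.col_apply, h1, hp1 c, hne]
    · simp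
  have hspan : Submodule.span K (Set.range M.col)
      = Submodule.span K (Set.range (fun c : {c // c ∈ Cset σ} => M.col (Sum.inr c.1))) := by
    apply le_antisymm
    · rw [Submodule.span_le]
      rintro _ ⟨b, rfl⟩
      rcases b with a | c
      · have : M.col (Sum.inl a) = 0 := by
          funext t
          exact h0 t a
        rw [this]; exact zero_mem _
      · by_cases hc : c ∈ Cset σ
        · exact Submodule.subset_span ⟨⟨c, hc⟩, rfl⟩
        · have : M.col (Sum.inr c) = 0 := by
            funext t
            rw [Matrix.col_apply, h1, if_neg]
            · rfl
            · intro h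
              exact hc (mem_Cset.2 ⟨t, h, hlt _⟩)
          rw [this]; exact zero_mem _
    · apply Submodule.span_mono
      rintro _ ⟨c, rfl⟩
      exact ⟨_, rfl⟩
  rw [Matrix.rank_eq_finrank_span_cols, hspan, finrank_span_eq_card hli, Fintype.card_coe]

/-- rank of the comparison map -/
theorem rank_q (hs : KReg x)
    (hm : Ideal.span {x 0, x 1, x 2} = maximalIdeal R) (hP : 3 ≤ P) (σ : Finset (Fin (P + 2)))
    (hl : Fin.last (P + 1) ∉ σ)
    (q : {i // i ∈ σ} → (((Fin (P + 1) → R) × (Fin P → R)) →ₗ[R] (Fin 3 → R)))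
    (hq : ∀ (i : {i // i ∈ σ}) (v : (Fin (P + 1) → R) × (Fin P → R)),
          (q i v 0) * x 0 + (q i v 1) * x 1 + (q i v 2) * x 2 =
          (if h : ((i : Fin (P + 2)) : ℕ) < P + 1 then
            ((Xmat x P).mulVec v.2 - x 2 ^ P • v.1) ⟨((i : Fin (P + 2)) : ℕ), h⟩
          else ∑ jj, v.1 jj * minorDelta x P jj)) :
    (Matrix.of fun (il : {i // i ∈ σ} × Fin 3)
              (b : (Fin (P + 1)) ⊕ (Fin P)) =>
            Ideal.Quotient.mk (maximalIdeal R)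
              (q il.1 (Sum.elim (fun a => (Pi.single a 1, 0))
                (fun c => (0, Pi.single c 1)) b) il.2)).rank = (Cset σ).card := by
  classical
  have hlt : ∀ i : {i // i ∈ σ}, ((i : Fin (P + 2)) : ℕ) < P + 1 := by
    rintro ⟨i, hi⟩
    have : i ≠ Fin.last _ := fun e => hl (e ▸ hi)
    exact Fin.lt_last_iff_ne_last.2 this
  have key : ∀ i v l, q i v l - sh v.2 ((i : Fin (P + 2)) : ℕ) (l : ℕ) ∈ maximalIdeal R := by
    intro i v l
    have := kz1_mem hs hm (fun l => q i v l - sh v.2 ((i : Fin (P + 2)) : ℕ) (l : ℕ)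
      + if l = 2 then x 2 ^ (P - 1) * v.1 ⟨i.1, hlt i⟩ else 0) (by
        have h := hq i v
        rw [dif_pos (hlt i), Pi.sub_apply, mulVec_sh, Pi.smul_apply, smul_eq_mul] at h
        have e : x 2 ^ P = x 2 * x 2 ^ (P - 1) := by rw [← pow_succ']; congr 1; omega
        rw [e] at h
        simp
        linear_combination h) l
    have h2 : (if l = 2 then x 2 ^ (P - 1) * v.1 ⟨i.1, hlt i⟩ else 0) ∈ maximalIdeal R := by
      split_ifs
      · exact Ideal.mul_mem_right _ _ (Ideal.pow_mem_of_mem _ (xmem hm 2) _ (by omega))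
      · exact zero_mem _
    simpa using sub_mem this h2
  have key' : ∀ (i : {i // i ∈ σ}) v (l : Fin 3), Ideal.Quotient.mk (maximalIdeal R) (q i v l)
      = Ideal.Quotient.mk (maximalIdeal R) (sh v.2 ((i : Fin (P + 2)) : ℕ) (l : ℕ)) :=
    fun i v l => Ideal.Quotient.eq.2 (key i v l)
  haveI : Nontrivial (R ⧸ maximalIdeal R) :=
    Ideal.Quotient.nontrivial_iff.2 (Ideal.IsPrime.ne_top inferInstance)
  apply rank_aux σ hlt
  · intro t a
    rw [Matrix.of_apply, key']
    simp [sh]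
  · intro t c
    rw [Matrix.of_apply, key']
    simp only [Sum.elim_inr, sh]
    rw [Finset.sum_eq_single c]
    · split_ifs <;> simp
    · intro b _ hb
      simp [Pi.single_apply, hb]
    · simp

end Build
end TrimHB

/-!
STATEMENT 19 (Corollary 5.12): let `(R,𝔪,k)` be regular local of dimension 3 with
`𝔪 = (x 0, x 1, x 2)` and `p = P+1 ≥ 4`.  Let `J_p = I_{p-1}(X_p) + (x₃^{p-1})` with
generators `φ = (Δ_0, …, Δ_{p-1}, x₃^{p-1})` and
`J'_p = I_{p-1}(X'_p) + (x₃^{2(p-1)})` with generators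
`φ' = (Δ'_0, …, Δ'_{p-1}, x₃^{2(p-1)})` (the last 0-based generator index is `P+1`,
the paper's `p+1`).  Both quotients have Tor-algebra class `H(p, p-1)`.  Let `σ` be an
index set of cardinality `t` and `Q₁` the degree-1 comparison map of the associated
trimming complex, i.e. any family `q i : F₂ → K₁` (`i ∈ σ`) with `m₁ ∘ q i = d₀'ⁱ`,
the `i`-th coordinate of the differential `d₂` of the minimal resolution
`F_• = (H ⊗ G)_•` of `R/J_p`.  Then:
(1) if `p+1 ∉ σ`, `tm_σ(J_p)` is Golod or of class `H(p-t, p-1-rank_k(Q₁⊗k))`; in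
    particular for `σ = [t]`, `t < p`, `tm_{[t]}(J_p)` has class `H(p-t, p-1-t)`;
(2) if `p+1 ∈ σ`, `tm_σ(J_p)` is Golod;
(3) if `p+1 ∉ σ`, `tm_σ(J'_p)` has class `H(p-t, p-1)`;
(4) if `p+1 ∈ σ`, `tm_σ(J'_p)` is Golod.
-/
theorem trim_hilbert_burch_classH
    {R : Type} [CommRing R] [IsNoetherianRing R] [IsLocalRing R]
    (x : Fin 3 → R)
    (hreg : RingTheory.Sequence.IsRegular R [x 0, x 1, x 2])
    (hx : Ideal.span {x 0, x 1, x 2} = maximalIdeal R)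
    (P : ℕ) (hP : 3 ≤ P)
    (σ : Finset (Fin (P + 2))) :
    -- (1)
    ((⟨P + 1, by omega⟩ : Fin (P + 2)) ∉ σ →
      (∀ q : {i // i ∈ σ} → (((Fin (P + 1) → R) × (Fin P → R)) →ₗ[R] (Fin 3 → R)),
        (∀ (i : {i // i ∈ σ}) (v : (Fin (P + 1) → R) × (Fin P → R)),
          (q i v 0) * x 0 + (q i v 1) * x 1 + (q i v 2) * x 2 =
          (if h : ((i : Fin (P + 2)) : ℕ) < P + 1 then
            ((Xmat x P).mulVec v.2 - x 2 ^ P • v.1) ⟨((i : Fin (P + 2)) : ℕ), h⟩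
          else ∑ jj, v.1 jj * minorDelta x P jj)) →
        IsGolodQuotient R (trimIdeal R
          (fun i : Fin (P + 2) => if h : (i : ℕ) < P + 1
            then minorDelta x P ⟨(i : ℕ), h⟩ else x 2 ^ P) σ) ∨
        HasTorClassH R (trimIdeal R
          (fun i : Fin (P + 2) => if h : (i : ℕ) < P + 1
            then minorDelta x P ⟨(i : ℕ), h⟩ else x 2 ^ P) σ)
          (P + 1 - σ.card)
          (P - (Matrix.of fun (il : {i // i ∈ σ} × Fin 3)
              (b : (Fin (P + 1)) ⊕ (Fin P)) =>
            Ideal.Quotient.mk (maximalIdeal R)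
              (q il.1 (Sum.elim (fun a => (Pi.single a 1, 0))
                (fun c => (0, Pi.single c 1)) b) il.2)).rank))) ∧
    -- (1), "in particular": σ = [t] with t < p
    ((∀ t : ℕ, t < P + 1 →
      HasTorClassH R (trimIdeal R
        (fun i : Fin (P + 2) => if h : (i : ℕ) < P + 1
          then minorDelta x P ⟨(i : ℕ), h⟩ else x 2 ^ P)
        (Finset.univ.filter (fun i : Fin (P + 2) => (i : ℕ) < t)))
        (P + 1 - t) (P - t))) ∧
    -- (2)
    ((⟨P + 1, by omega⟩ : Fin (P + 2)) ∈ σ →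
      IsGolodQuotient R (trimIdeal R
        (fun i : Fin (P + 2) => if h : (i : ℕ) < P + 1
          then minorDelta x P ⟨(i : ℕ), h⟩ else x 2 ^ P) σ)) ∧
    -- (3)
    ((⟨P + 1, by omega⟩ : Fin (P + 2)) ∉ σ →
      HasTorClassH R (trimIdeal R
        (fun i : Fin (P + 2) => if h : (i : ℕ) < P + 1
          then minorDelta' x P ⟨(i : ℕ), h⟩ else x 2 ^ (2 * P)) σ)
        (P + 1 - σ.card) P) ∧
    -- (4)
    ((⟨P + 1, by omega⟩ : Fin (P + 2)) ∈ σ →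
      IsGolodQuotient R (trimIdeal R
        (fun i : Fin (P + 2) => if h : (i : ℕ) < P + 1
          then minorDelta' x P ⟨(i : ℕ), h⟩ else x 2 ^ (2 * P)) σ)) := by
  have hlast : (⟨P + 1, by omega⟩ : Fin (P + 2)) = Fin.last (P + 1) := rfl
  rw [hlast]
  refine ⟨fun hl q hq => Or.inr ?_, fun t ht => ?_, TrimHB.golod1 hreg hx hP σ,
    TrimHB.classH2 hreg hx hP σ, TrimHB.golod2 hreg hx hP σ⟩
  · rw [TrimHB.rank_q (TrimHB.kreg_self hreg) hx hP σ hl q hq]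
    exact TrimHB.classH1 hreg hx hP σ hl
  · have h := TrimHB.classH1 hreg hx hP (Finset.univ.filter (fun i : Fin (P + 2) => (i : ℕ) < t))
      (by simp only [Finset.mem_filter, Finset.mem_univ, true_and, Fin.val_last]; omega)
    rw [TrimHB.Cset_card_init t ht, Fin.card_filter_val_lt, min_eq_right (by omega)] at h
    exact h
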